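/- arXiv:2404.09720 — 3 statements merged into one kernel-verified Lean document; each statement's English description precedes it below -/
import Mathlib

section
/- For every integer k ≥ 3 there exist a real β > 0 and a positive integer s₀ such that the following holds. Let n, s be integers with s > s₀ and ks + k ≤ n ≤ (1+β)ks + k − 2. If F ⊆ binom([n],k) satisfies ν(F) ≤ s and |F| > max{|E₀(n,k,s)|, |E₁(n,k,s)|}, then there exists a set W ⊆ [n] with |W| = ks + k − 1 such that every member of F is contained in W (i.e., up to relabeling of vertices, F is a subfamily of the family of all k-subsets of [ks+k−1]). -/
/-- The `(x,y)`-shift of a single edge `A` with respect to the family `F`. -/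
def shiftEdge (x y : ℕ) (F : Finset (Finset ℕ)) (A : Finset ℕ) : Finset ℕ :=
  if y ∈ A ∧ x ∉ A ∧ insert x (A.erase y) ∉ F then insert x (A.erase y) else A

/-- The `(x,y)`-shift of a family `F`. -/
def shiftFam (x y : ℕ) (F : Finset (Finset ℕ)) : Finset (Finset ℕ) :=
  F.image (shiftEdge x y F)

/-- The matching number: the largest size of a pairwise-disjoint subfamily. -/
noncomputable def matchingNumber (F : Finset (Finset ℕ)) : ℕ :=
  sSup {m | ∃ M ⊆ F, M.card = m ∧ (M : Set (Finset ℕ)).PairwiseDisjoint id}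

/-- `F` is non-trivial on `[n]`: no vertex of `[n] = {1,…,n}` is isolated. -/
def NonTrivial (n : ℕ) (F : Finset (Finset ℕ)) : Prop :=
  ∀ v ∈ Finset.Icc 1 n, ∃ A ∈ F, v ∈ A

/-- `F` is shifted on `Y`: all `(x,y)`-shifts with `x < y` in `Y` fix `F`. -/
def ShiftedOn (Y : Finset ℕ) (F : Finset (Finset ℕ)) : Prop :=
  ∀ x ∈ Y, ∀ y ∈ Y, x < y → shiftFam x y F = F

/-- The clique number of the `k`-graph `F` on `[n]`. -/
noncomputable def cliqueNum (n k : ℕ) (F : Finset (Finset ℕ)) : ℕ :=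
  sSup {m | ∃ U ⊆ Finset.Icc 1 n, U.card = m ∧ Finset.powersetCard k U ⊆ F}

/-- The vertex-cover number of the `k`-graph `F` on `[n]`. -/
noncomputable def coverNum (n : ℕ) (F : Finset (Finset ℕ)) : ℕ :=
  sInf {t | ∃ T ⊆ Finset.Icc 1 n, T.card = t ∧ ∀ A ∈ F, (A ∩ T).Nonempty}

/-- The link `N_F(x)`. -/
def nbr (F : Finset (Finset ℕ)) (x : ℕ) : Finset (Finset ℕ) :=
  (F.filter fun A => x ∈ A).image fun A => A.erase x

/-- The link `N_F(x,y)`. -/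
def nbr2 (F : Finset (Finset ℕ)) (x y : ℕ) : Finset (Finset ℕ) :=
  (F.filter fun A => x ∈ A ∧ y ∈ A).image fun A => (A.erase x).erase y

/-- The link `N_F(x, ȳ)`. -/
def nbrBar (F : Finset (Finset ℕ)) (x y : ℕ) : Finset (Finset ℕ) :=
  (F.filter fun A => x ∈ A ∧ y ∉ A).image fun A => A.erase x

/-- The extremal family `E₀(n,k,s)`. -/
def E0 (n k s : ℕ) : Finset (Finset ℕ) :=
  Finset.powersetCard k (Finset.Icc 1 (k * s + k - 2)) ∪
  ((Finset.powersetCard k (Finset.Icc 1 n)).filter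
    (fun A => A \ Finset.Icc 1 (k * s + k - 2) = {k * s + k - 1} ∧
      (A ∩ Finset.Icc 1 (k - 1)).Nonempty)) ∪
  ((Finset.Icc (k * s + k) n).image (fun x => insert x (Finset.Icc 1 (k - 1))))

open Classical in
/-- The extremal family `E₁(n,k,s)`. -/
noncomputable def E1 (n k s : ℕ) : Finset (Finset ℕ) :=
  Finset.powersetCard k (Finset.Icc 1 (k * s + k - 2)) ∪
  ((Finset.powersetCard k (Finset.Icc 1 n)).filter
    (fun A => 1 ∈ A ∧ ∃ x ∈ Finset.Icc (k * s + k - 1) n,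
      A \ Finset.Icc 1 (k * s + k - 2) = {x}))

/-- `F` is `s`-saturated on `[n]`. -/
def Saturated (n k s : ℕ) (F : Finset (Finset ℕ)) : Prop :=
  matchingNumber F ≤ s ∧
  ∀ G ∈ Finset.powersetCard k (Finset.Icc 1 n), G ∉ F →
    matchingNumber (insert G F) = s + 1


open Finset

/-- `M` is a matching in `F`. -/
def IsMatch (F M : Finset (Finset ℕ)) : Prop :=
  M ⊆ F ∧ (M : Set (Finset ℕ)).PairwiseDisjoint id

lemma IsMatch.card_le {F M : Finset (Finset ℕ)} {s : ℕ} (hs : matchingNumber F ≤ s)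
    (h : IsMatch F M) : M.card ≤ s := by
  refine le_trans ?_ hs
  unfold matchingNumber
  apply le_csSup
  · refine ⟨F.card, ?_⟩
    rintro m ⟨M, hM, rfl, -⟩
    exact card_le_card hM
  · exact ⟨M, h.1, rfl, h.2⟩

/-- Vertices covered by `M`. -/
def verts (M : Finset (Finset ℕ)) : Finset ℕ := M.biUnion id

lemma mem_verts {M : Finset (Finset ℕ)} {x : ℕ} : x ∈ verts M ↔ ∃ A ∈ M, x ∈ A := by
  simp [verts]

lemma IsMatch.card_verts {F M : Finset (Finset ℕ)} {k : ℕ} (hF : ∀ A ∈ F, A.card = k)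
    (h : IsMatch F M) : (verts M).card = k * M.card := by
  unfold verts
  rw [card_biUnion (fun x hx y hy hxy => h.2 hx hy hxy)]
  rw [sum_congr rfl (fun A hA => (hF A (h.1 hA) : (id A).card = k))]
  simp [mul_comm]

lemma IsMatch.insert {F M : Finset (Finset ℕ)} {A : Finset ℕ} (h : IsMatch F M) (hA : A ∈ F)
    (hd : Disjoint A (verts M)) : IsMatch F (insert A M) := by
  refine ⟨insert_subset hA h.1, ?_⟩
  rw [coe_insert]
  apply h.2.insert
  intro B hB _
  refine hd.mono_right ?_
  intro x hx
  exact mem_verts.2 ⟨B, hB, hx⟩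

lemma verts_insert (A : Finset ℕ) (M : Finset (Finset ℕ)) :
    verts (insert A M) = A ∪ verts M := by
  simp [verts, biUnion_insert]

/-- number of edges at `v` -/
lemma card_star (V : Finset ℕ) (k v : ℕ) (hk : 1 ≤ k) (hv : v ∈ V) :
    ((powersetCard k V).filter (fun A => v ∈ A)).card = (V.card - 1).choose (k - 1) := by
  have := card_filter_powersetCard_subset {v} V k (by simpa using hv) (by simpa using hk)
  simpa using this

lemma card_star2 (V : Finset ℕ) (k v w : ℕ) (hk : 2 ≤ k) (hvw : v ≠ w) :
    ((powersetCard k V).filter (fun A => v ∈ A ∧ w ∈ A)).card ≤ (V.card - 2).choose (k - 2) := by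
  by_cases h : v ∈ V ∧ w ∈ V
  · have hs : ({v, w} : Finset ℕ) ⊆ V := by
      intro x hx
      simp at hx
      rcases hx with rfl | rfl
      exacts [h.1, h.2]
    have := card_filter_powersetCard_subset {v, w} V k hs (by rw [card_pair hvw]; exact hk)
    rw [card_pair hvw] at this
    simp only [insert_subset_iff, singleton_subset_iff] at this
    exact this.le
  · rw [filter_eq_empty_iff.2]
    · simp
    · intro A hA hh
      have := (mem_powersetCard.1 hA).1
      exact h ⟨this hh.1, this hh.2⟩

lemma card_star_le (V : Finset ℕ) (k v : ℕ) (hk : 1 ≤ k) :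
    ((powersetCard k V).filter (fun A => v ∈ A)).card ≤ (V.card - 1).choose (k - 1) := by
  by_cases hv : v ∈ V
  · exact (card_star V k v hk hv).le
  · rw [filter_eq_empty_iff.2]
    · simp
    · intro A hA hh
      exact hv ((mem_powersetCard.1 hA).1 hh)

/-- sets meeting both `X` and `Y` (disjoint). -/
lemma card_meet_two (V X Y : Finset ℕ) (k : ℕ) (hk : 2 ≤ k) (hXY : Disjoint X Y) :
    ((powersetCard k V).filter (fun A => (∃ x ∈ X, x ∈ A) ∧ (∃ y ∈ Y, y ∈ A))).card
      ≤ X.card * Y.card * (V.card - 2).choose (k - 2) := by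
  calc _ ≤ ((X ×ˢ Y).biUnion
        (fun p => (powersetCard k V).filter (fun A => p.1 ∈ A ∧ p.2 ∈ A))).card := by
        apply card_le_card
        intro A hA
        simp only [mem_filter] at hA
        obtain ⟨hA, ⟨x, hx, hxA⟩, y, hy, hyA⟩ := hA
        simp only [mem_biUnion, mem_filter, mem_product]
        exact ⟨(x, y), ⟨hx, hy⟩, hA, hxA, hyA⟩
    _ ≤ (X ×ˢ Y).card * (V.card - 2).choose (k - 2) := by
        apply card_biUnion_le_card_mul
        rintro ⟨x, y⟩ hp
        rw [mem_product] at hp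
        apply card_star2 _ _ _ _ hk
        rintro h
        exact disjoint_left.1 hXY hp.1 (h ▸ hp.2)
    _ = _ := by rw [card_product]

lemma exists_edge_avoid {V : Finset ℕ} {F : Finset (Finset ℕ)} {k D v : ℕ} {X : Finset ℕ}
    (hk : 2 ≤ k) (hF : F ⊆ powersetCard k V)
    (hdeg : D < (F.filter (fun A => v ∈ A)).card) (hvX : v ∉ X)
    (hX : X.card * (V.card - 2).choose (k - 2) ≤ D) :
    ∃ A ∈ F, v ∈ A ∧ Disjoint A X := by
  by_contra hcon
  push Not at hcon
  have : (F.filter (fun A => v ∈ A)).card ≤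
      ((powersetCard k V).filter (fun A => (∃ x ∈ ({v} : Finset ℕ), x ∈ A) ∧ (∃ y ∈ X, y ∈ A))).card := by
    apply card_le_card
    intro A hA
    simp only [mem_filter] at hA
    have h2 := hcon A hA.1 hA.2
    rw [not_disjoint_iff] at h2
    obtain ⟨y, hy, hyX⟩ := h2
    simp only [mem_filter, mem_singleton, exists_eq_left]
    exact ⟨hF hA.1, hA.2, y, hyX, hy⟩
  have h3 := card_meet_two V {v} X k hk (by simpa using hvX)
  simp only [card_singleton, one_mul] at h3
  omega

lemma greedy {V : Finset ℕ} {F : Finset (Finset ℕ)} {k D : ℕ}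
    (hk : 2 ≤ k) (hF : F ⊆ powersetCard k V) (B : Finset ℕ) (M0 : Finset (Finset ℕ))
    (hM0 : IsMatch F M0) (I : Finset ℕ)
    (hdeg : ∀ v ∈ I, D < (F.filter (fun A => v ∈ A)).card)
    (hIB : ∀ v ∈ I, v ∉ B)
    (hX : (k * (M0.card + I.card) + B.card) * (V.card - 2).choose (k - 2) ≤ D) :
    ∃ M1, IsMatch F M1 ∧ I ⊆ verts M1 ∧ verts M1 ∩ B = verts M0 ∩ B ∧
      M1.card ≤ M0.card + I.card := by
  induction I using Finset.induction_on with
  | empty => exact ⟨M0, hM0, by simp, rfl, by simp⟩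
  | insert v I hv ih =>
    rw [card_insert_of_notMem hv] at hX
    obtain ⟨M1, h1, h2, h3, h4⟩ := ih (fun w hw => hdeg w (mem_insert_of_mem hw))
      (fun w hw => hIB w (mem_insert_of_mem hw))
      (le_trans (Nat.mul_le_mul_right _ (by gcongr; omega)) hX)
    rw [card_insert_of_notMem hv]
    by_cases hvM : v ∈ verts M1
    · exact ⟨M1, h1, insert_subset hvM h2, h3, by omega⟩
    · have hc : (verts M1 ∪ B).card ≤ k * (M0.card + (I.card + 1)) + B.card := by
        refine (card_union_le _ _).trans ?_
        rw [h1.card_verts (fun A hA => (mem_powersetCard.1 (hF hA)).2)]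
        gcongr
        omega
      obtain ⟨A, hA, hvA, hd⟩ := exists_edge_avoid (X := verts M1 ∪ B) hk hF
        (hdeg v (mem_insert_self _ _))
        (by
          rw [mem_union, not_or]
          exact ⟨hvM, hIB v (mem_insert_self _ _)⟩)
        (le_trans (Nat.mul_le_mul_right _ hc) hX)
      rw [disjoint_union_right] at hd
      refine ⟨insert A M1, h1.insert hA hd.1, ?_, ?_, ?_⟩
      · rw [verts_insert]
        exact insert_subset (mem_union_left _ hvA) (h2.trans subset_union_right)
      · rw [verts_insert, union_inter_distrib_right, disjoint_iff_inter_eq_empty.1 hd.2, empty_union, h3]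
      · exact (card_insert_le _ _).trans (by omega)

/-- Exchange lemma: nearly complete `k`-graphs have nearly perfect matchings. -/
lemma near_perfect {V' : Finset ℕ} {F : Finset (Finset ℕ)} {k D q : ℕ}
    (hk : 2 ≤ k) (hFk : ∀ A ∈ F, A.card = k)
    (hV : 2 * k * q ≤ V'.card) (_hq : 1 ≤ q)
    (hD : k * D < q.choose (k - 1))
    (hmiss : ∀ v ∈ V', ((powersetCard k V').filter (fun A => v ∈ A ∧ A ∉ F)).card ≤ D) :
    ∃ M, IsMatch F M ∧ verts M ⊆ V' ∧ V'.card < k * M.card + k := by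
  classical
  -- a maximum matching inside `V'`
  obtain ⟨M, hM, hmax⟩ : ∃ M, (IsMatch F M ∧ verts M ⊆ V') ∧
      ∀ M', (IsMatch F M' ∧ verts M' ⊆ V') → M'.card ≤ M.card := by
    have hne : (F.powerset.filter (fun M => IsMatch F M ∧ verts M ⊆ V')).Nonempty :=
      ⟨∅, by simp [IsMatch, verts]⟩
    obtain ⟨M, hM, hmax⟩ := exists_max_image _ (fun M => M.card) hne
    refine ⟨M, (mem_filter.1 hM).2, fun M' hM' => hmax M' ?_⟩
    exact mem_filter.2 ⟨mem_powerset.2 hM'.1.1, hM'⟩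
  refine ⟨M, hM.1, hM.2, ?_⟩
  by_contra hcon
  push Not at hcon
  have hvc := hM.1.card_verts hFk
  set U := V' \ verts M with hU
  have hUc : U.card = V'.card - k * M.card := by
    rw [hU, card_sdiff_of_subset hM.2, hvc]
  have hkU : k ≤ U.card := by omega
  have hUV : U ⊆ V' := sdiff_subset
  -- no edge inside `U`
  have hnoedge : ∀ A ∈ F, ¬ A ⊆ U := by
    intro A hA hAU
    have hd : Disjoint A (verts M) := disjoint_of_subset_left hAU sdiff_disjoint
    have h1 := hM.1.insert hA hd
    have hAM : A ∉ M := by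
      intro h
      have hAne : A.Nonempty := by
        rw [← card_pos, hFk A hA]; omega
      obtain ⟨x, hx⟩ := hAne
      exact disjoint_left.1 hd hx (mem_verts.2 ⟨A, h, hx⟩)
    have h2 := hmax _ ⟨h1, by
      rw [verts_insert]; exact union_subset (hAU.trans hUV) hM.2⟩
    rw [card_insert_of_notMem hAM] at h2
    omega
  have hDD : D < q.choose (k - 1) := lt_of_le_of_lt (Nat.le_mul_of_pos_left D (by omega)) hD
  by_cases hMq : M.card < q
  · have hUq : q + 1 ≤ U.card := by
      have h1 : k * M.card ≤ k * q := Nat.mul_le_mul_left _ hMq.le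
      have h2 : 2 * q ≤ k * q := Nat.mul_le_mul_right _ hk
      have h3 : 2 * k * q = 2 * (k * q) := by ring
      omega
    obtain ⟨u, hu⟩ : U.Nonempty := by rw [← card_pos]; omega
    have h1 := card_star U k u (by omega) hu
    have h2 : ((powersetCard k U).filter (fun A => u ∈ A)).card ≤
        ((powersetCard k V').filter (fun A => u ∈ A ∧ A ∉ F)).card := by
      apply card_le_card
      intro A hA
      rw [mem_filter, mem_powersetCard] at hA
      rw [mem_filter, mem_powersetCard]
      exact ⟨⟨hA.1.1.trans hUV, hA.1.2⟩, hA.2, fun h => hnoedge A h hA.1.1⟩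
    have h3 := hmiss u (hUV hu)
    have h4 : q.choose (k - 1) ≤ (U.card - 1).choose (k - 1) :=
      Nat.choose_le_choose _ (by omega)
    omega
  · push Not at hMq
    -- labels
    obtain ⟨U', hU'U, hU'c⟩ := exists_subset_card_eq hkU
    let u : Fin k → ℕ := fun i => U'.orderEmbOfFin hU'c i
    have huinj : Function.Injective u := (U'.orderEmbOfFin hU'c).injective
    have huU : ∀ i, u i ∈ U := fun i => hU'U (orderEmbOfFin_mem _ _ _)
    let e : Finset ℕ → Fin k → ℕ := fun E i =>
      if h : E.card = k then E.orderEmbOfFin h i else 0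
    have hecard : ∀ E ∈ M, E.card = k := fun E hE => hFk E (hM.1.1 hE)
    have heinj : ∀ E ∈ M, Function.Injective (e E) := by
      intro E hE i j hij
      simp only [e, hecard E hE, dite_true] at hij
      exact (E.orderEmbOfFin (hecard E hE)).injective hij
    have hemem : ∀ E ∈ M, ∀ i, e E i ∈ E := by
      intro E hE i
      simp only [e, hecard E hE, dite_true]
      exact orderEmbOfFin_mem _ _ _
    have hdisj : ∀ E ∈ M, ∀ E' ∈ M, ∀ x, x ∈ E → x ∈ E' → E = E' := by
      intro E hE E' hE' x hx hx'
      by_contra hne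
      exact disjoint_left.1 (hM.1.2 hE hE' hne) hx hx'
    have huM : ∀ i, ∀ E ∈ M, u i ∉ E := by
      intro i E hE h
      exact (mem_sdiff.1 (huU i)).2 (mem_verts.2 ⟨E, hE, h⟩)
    let T : Finset (Finset ℕ) → Fin k → Finset ℕ := fun S i =>
      insert (u i) (S.image (fun E => e E i))
    have hmemT : ∀ S i x, x ∈ T S i ↔ x = u i ∨ ∃ E ∈ S, e E i = x := by
      intro S i x; simp [T]
    have hTcard : ∀ S ∈ powersetCard (k - 1) M, ∀ i, (T S i).card = k := by
      intro S hS i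
      rw [mem_powersetCard] at hS
      simp only [T]
      rw [card_insert_of_notMem, card_image_of_injOn]
      · omega
      · intro E hE E' hE' h
        simp only at h
        exact hdisj E (hS.1 hE) E' (hS.1 hE') _ (hemem E (hS.1 hE) i)
          (h ▸ hemem E' (hS.1 hE') i)
      · intro h
        rw [mem_image] at h
        obtain ⟨E, hE, h⟩ := h
        exact huM i E (hS.1 hE) (h ▸ hemem E (hS.1 hE) i)
    have hTV : ∀ S ∈ powersetCard (k - 1) M, ∀ i, T S i ⊆ V' := by
      intro S hS i x hx
      rw [mem_powersetCard] at hS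
      rw [hmemT] at hx
      rcases hx with rfl | ⟨E, hE, rfl⟩
      · exact hUV (huU i)
      · exact hM.2 (mem_verts.2 ⟨E, hS.1 hE, hemem E (hS.1 hE) i⟩)
    have hTinj : ∀ i, Set.InjOn (fun S => T S i) (powersetCard (k - 1) M : Set (Finset (Finset ℕ))) := by
      have key : ∀ i, ∀ S ∈ powersetCard (k - 1) M, ∀ S' ∈ powersetCard (k - 1) M,
          T S i = T S' i → S ⊆ S' := by
        intro i S hS S' hS' h E hE
        rw [mem_powersetCard] at hS hS'
        have h1 : e E i ∈ T S i := (hmemT _ _ _).2 (Or.inr ⟨E, hE, rfl⟩)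
        rw [h, hmemT] at h1
        rcases h1 with h1 | ⟨E', hE', h1⟩
        · exact absurd (h1 ▸ hemem E (hS.1 hE) i) (huM i E (hS.1 hE))
        · have := hdisj E (hS.1 hE) E' (hS'.1 hE') _ (hemem E (hS.1 hE) i)
            (h1 ▸ hemem E' (hS'.1 hE') i)
          rwa [this]
      intro i S hS S' hS' h
      exact Subset.antisymm (key i S hS S' hS' h) (key i S' hS' S hS h.symm)
    -- every `S` has a missing transversal
    have hbad : ∀ S ∈ powersetCard (k - 1) M, ∃ i, T S i ∉ F := by
      intro S hS
      by_contra hall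
      push Not at hall
      have hS' := mem_powersetCard.1 hS
      have hTd : ∀ i j, i ≠ j → Disjoint (T S i) (T S j) := by
        intro i j hij
        rw [disjoint_left]
        intro x hx hx'
        rw [hmemT] at hx hx'
        rcases hx with rfl | ⟨E, hE, rfl⟩
        · rcases hx' with h | ⟨E', hE', h⟩
          · exact hij (huinj h)
          · exact huM i E' (hS'.1 hE') (h ▸ hemem E' (hS'.1 hE') j)
        · rcases hx' with h | ⟨E', hE', h⟩
          · exact huM j E (hS'.1 hE) (h ▸ hemem E (hS'.1 hE) i)
          · have := hdisj E (hS'.1 hE) E' (hS'.1 hE') _ (hemem E (hS'.1 hE) i)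
              (h ▸ hemem E' (hS'.1 hE') j)
            subst this
            exact hij (heinj E (hS'.1 hE) h.symm)
      have hTne : ∀ i, (T S i).Nonempty := fun i => ⟨u i, (hmemT _ _ _).2 (Or.inl rfl)⟩
      have hTi : Function.Injective (T S) := by
        intro i j h
        by_contra hij
        have := hTd i j hij
        rw [h, disjoint_self] at this
        exact (hTne j).ne_empty this
      have hTM : ∀ i, ∀ E ∈ M \ S, Disjoint (T S i) E := by
        intro i E hE
        rw [mem_sdiff] at hE
        rw [disjoint_left]
        intro x hx hxE
        rw [hmemT] at hx
        rcases hx with rfl | ⟨E', hE', rfl⟩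
        · exact huM i E hE.1 hxE
        · have := hdisj E hE.1 E' (hS'.1 hE') _ hxE (hemem E' (hS'.1 hE') i)
          exact hE.2 (this ▸ hE')
      have hnew : IsMatch F ((M \ S) ∪ univ.image (T S)) := by
        constructor
        · apply union_subset (sdiff_subset.trans hM.1.1)
          intro A hA
          rw [mem_image] at hA
          obtain ⟨i, -, rfl⟩ := hA
          exact hall i
        · intro A hA A' hA' hne
          simp only [coe_union, Set.mem_union, mem_coe, mem_image, mem_univ, true_and] at hA hA'
          rcases hA with hA | ⟨i, rfl⟩
          · rcases hA' with hA' | ⟨j, rfl⟩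
            · exact hM.1.2 (mem_sdiff.1 hA).1 (mem_sdiff.1 hA').1 hne
            · exact (hTM j A hA).symm
          · rcases hA' with hA' | ⟨j, rfl⟩
            · exact hTM i A' hA'
            · exact hTd i j (fun h => hne (h ▸ rfl))
      have hnewV : verts ((M \ S) ∪ univ.image (T S)) ⊆ V' := by
        intro x hx
        rw [mem_verts] at hx
        obtain ⟨A, hA, hx⟩ := hx
        simp only [mem_union, mem_image, mem_univ, true_and] at hA
        rcases hA with hA | ⟨i, rfl⟩
        · exact hM.2 (mem_verts.2 ⟨A, (mem_sdiff.1 hA).1, hx⟩)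
        · exact hTV S hS i hx
      have hc := hmax _ ⟨hnew, hnewV⟩
      rw [card_union_of_disjoint, card_sdiff_of_subset hS'.1, card_image_of_injective _ hTi,
        card_univ, Fintype.card_fin] at hc
      · have := card_le_card hS'.1
        omega
      · rw [disjoint_left]
        intro A hA hA'
        rw [mem_image] at hA'
        obtain ⟨i, -, rfl⟩ := hA'
        have := hTM i _ hA
        rw [disjoint_self] at this
        exact (hTne i).ne_empty this
    have hcount : (powersetCard (k - 1) M).card ≤ k * D := by
      calc _ ≤ ((univ : Finset (Fin k)).biUnion
            (fun i => (powersetCard (k - 1) M).filter (fun S => T S i ∉ F))).card := by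
            apply card_le_card
            intro S hS
            obtain ⟨i, hi⟩ := hbad S hS
            rw [mem_biUnion]
            exact ⟨i, mem_univ _, mem_filter.2 ⟨hS, hi⟩⟩
        _ ≤ (univ : Finset (Fin k)).card * D := by
            apply card_biUnion_le_card_mul
            intro i _
            refine le_trans ?_ (hmiss (u i) (hUV (huU i)))
            apply card_le_card_of_injOn (fun S => T S i)
            · intro S hS
              have hS := mem_filter.1 hS
              refine mem_coe.2 (mem_filter.2 ⟨mem_powersetCard.2 ⟨hTV S hS.1 i, hTcard S hS.1 i⟩,
                (hmemT _ _ _).2 (Or.inl rfl), hS.2⟩)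
            · intro S hS S' hS' h
              exact hTinj i (mem_filter.1 hS).1 (mem_filter.1 hS').1 h
        _ = k * D := by simp
    rw [card_powersetCard] at hcount
    have := Nat.choose_le_choose (k - 1) hMq
    omega

/-- low-degree vertices -/
def lowV (V : Finset ℕ) (F : Finset (Finset ℕ)) (D : ℕ) : Finset ℕ :=
  V.filter (fun v => (F.filter (fun A => v ∈ A)).card ≤ D)

/-- vertices missing many edges -/
def missV (V : Finset ℕ) (F : Finset (Finset ℕ)) (k D : ℕ) : Finset ℕ :=
  V.filter (fun v => D < ((powersetCard k V).filter (fun A => v ∈ A ∧ A ∉ F)).card)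

lemma deg_add_miss {V : Finset ℕ} {F : Finset (Finset ℕ)} {k v : ℕ} (hk : 1 ≤ k)
    (hF : F ⊆ powersetCard k V) (hv : v ∈ V) :
    (F.filter (fun A => v ∈ A)).card +
      ((powersetCard k V).filter (fun A => v ∈ A ∧ A ∉ F)).card = (V.card - 1).choose (k - 1) := by
  rw [← card_star V k v hk hv, ← card_union_of_disjoint]
  · congr 1
    ext A
    simp only [mem_union, mem_filter]
    constructor
    · rintro (h | h)
      · exact ⟨hF h.1, h.2⟩
      · exact ⟨h.1, h.2.1⟩
    · intro h
      by_cases hA : A ∈ F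
      · exact Or.inl ⟨hA, h.2⟩
      · exact Or.inr ⟨h.1, h.2, hA⟩
  · rw [disjoint_left]
    intro A hA hA'
    exact (mem_filter.1 hA').2.2 (mem_filter.1 hA).1

lemma lowV_subset_missV {V : Finset ℕ} {F : Finset (Finset ℕ)} {k D : ℕ} (hk : 1 ≤ k)
    (hF : F ⊆ powersetCard k V) (hD : 2 * D < (V.card - 1).choose (k - 1)) :
    lowV V F D ⊆ missV V F k D := by
  intro v hv
  have hv := mem_filter.1 hv
  have := deg_add_miss hk hF hv.1
  exact mem_filter.2 ⟨hv.1, by omega⟩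

lemma card_match_le_cover {F M : Finset (Finset ℕ)} {B : Finset ℕ} (hM : IsMatch F M)
    (h : ∀ A ∈ M, (A ∩ B).Nonempty) : M.card ≤ (verts M ∩ B).card := by
  have h1 : M.card ≤ (M.biUnion (fun A => A ∩ B)).card := by
    apply card_le_card_biUnion
    · intro A hA A' hA' hne
      exact (hM.2 hA hA' hne).mono inter_subset_left inter_subset_left
    · exact h
  refine h1.trans (card_le_card ?_)
  intro x hx
  rw [mem_biUnion] at hx
  obtain ⟨A, hA, hx⟩ := hx
  rw [mem_inter] at hx ⊢
  exact ⟨mem_verts.2 ⟨A, hA, hx.1⟩, hx.2⟩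

lemma cover_bound {V : Finset ℕ} {F : Finset (Finset ℕ)} {k D q s : ℕ}
    (hk : 2 ≤ k) (hF : F ⊆ powersetCard k V) (hs : matchingNumber F ≤ s)
    (hD2 : 2 * D < (V.card - 1).choose (k - 1))
    (h1 : (k + 1) * (missV V F k D).card * (V.card - 2).choose (k - 2) ≤ D)
    (h2 : 2 * k * q + (k + 1) * (missV V F k D).card ≤ V.card)
    (hq : k * D < q.choose (k - 1))
    (M0 : Finset (Finset ℕ)) (hM0 : IsMatch F M0)
    (hM0B : ∀ A ∈ M0, (A ∩ lowV V F D).Nonempty) :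
    V.card + (verts M0 ∩ lowV V F D).card < (lowV V F D).card + k * s + k := by
  have hBL := lowV_subset_missV (by omega) hF hD2
  set B := lowV V F D with hB
  set L := missV V F k D with hL
  have hFk : ∀ A ∈ F, A.card = k := fun A hA => (mem_powersetCard.1 (hF hA)).2
  have hBV : B ⊆ V := filter_subset _ _
  have hLB : (L \ B).card = L.card - B.card := card_sdiff_of_subset hBL
  have hBLc : B.card ≤ L.card := card_le_card hBL
  have hM0c : M0.card ≤ B.card :=
    (card_match_le_cover (B := B) (M := M0) hM0 hM0B).trans (card_le_card inter_subset_right)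
  have hIc : M0.card + (L \ B).card ≤ L.card := by omega
  obtain ⟨M1, hM1, hM1L, hM1B, hM1c⟩ := greedy (D := D) hk hF B M0 hM0 (L \ B)
    (by
      intro v hv
      rw [mem_sdiff] at hv
      have hvV : v ∈ V := (mem_filter.1 hv.1).1
      by_contra hcon
      exact hv.2 (mem_filter.2 ⟨hvV, by omega⟩))
    (fun v hv => (mem_sdiff.1 hv).2)
    (by
      refine le_trans (Nat.mul_le_mul_right _ ?_) h1
      rw [add_mul, one_mul]
      gcongr)
  have hM1V : verts M1 ⊆ V := by
    intro x hx
    obtain ⟨A, hA, hx⟩ := mem_verts.1 hx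
    exact (mem_powersetCard.1 (hF (hM1.1 hA))).1 hx
  have hM1vc := hM1.card_verts hFk
  set V' := V \ (verts M1 ∪ B) with hV'
  have hUV : verts M1 ∪ B ⊆ V := union_subset hM1V hBV
  have hV'c : V'.card + (verts M1 ∪ B).card = V.card := by
    rw [hV', card_sdiff_of_subset hUV]
    have := card_le_card hUV
    omega
  have hui := card_union_add_card_inter (verts M1) B
  have hsmall : (verts M1 ∪ B).card ≤ (k + 1) * L.card := by
    have : k * M1.card ≤ k * L.card := Nat.mul_le_mul_left _ (hM1c.trans hIc)
    rw [add_mul, one_mul]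
    omega
  obtain ⟨M2, hM2, hM2V, hM2c⟩ := near_perfect (V' := V') (F := F) (k := k) (D := D) (q := q) hk hFk
    (by omega)
    (by
      by_contra h0
      have : q = 0 := by omega
      subst this
      rw [Nat.choose_eq_zero_of_lt (by omega)] at hq
      omega)
    hq
    (by
      intro v hv
      rw [hV', mem_sdiff, mem_union, not_or] at hv
      have hvL : v ∉ L := by
        intro h
        exact hv.2.1 (hM1L (mem_sdiff.2 ⟨h, hv.2.2⟩))
      have : ((powersetCard k V).filter (fun A => v ∈ A ∧ A ∉ F)).card ≤ D := by
        by_contra hcon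
        exact hvL (mem_filter.2 ⟨hv.1, by omega⟩)
      refine le_trans (card_le_card ?_) this
      intro A hA
      rw [mem_filter] at hA ⊢
      exact ⟨powersetCard_mono sdiff_subset hA.1, hA.2⟩)
  have hdis : Disjoint (verts M1) (verts M2) := by
    rw [disjoint_left]
    intro x hx hx'
    have := hM2V hx'
    rw [hV', mem_sdiff, mem_union, not_or] at this
    exact this.2.1 hx
  have hun : IsMatch F (M1 ∪ M2) := by
    refine ⟨union_subset hM1.1 hM2.1, ?_⟩
    intro A hA A' hA' hne
    simp only [coe_union, Set.mem_union, mem_coe] at hA hA'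
    have key : ∀ E ∈ M1, ∀ E' ∈ M2, Disjoint E E' := by
      intro E hE E' hE'
      rw [disjoint_left]
      intro x hx hx'
      exact disjoint_left.1 hdis (mem_verts.2 ⟨E, hE, hx⟩) (mem_verts.2 ⟨E', hE', hx'⟩)
    rcases hA with hA | hA <;> rcases hA' with hA' | hA'
    · exact hM1.2 hA hA' hne
    · exact key A hA A' hA'
    · exact (key A' hA' A hA).symm
    · exact hM2.2 hA hA' hne
  have hdM : Disjoint M1 M2 := by
    rw [disjoint_left]
    intro A hA hA'
    have hne : A.Nonempty := by
      rw [← card_pos, hFk A (hM1.1 hA)]; omega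
    obtain ⟨x, hx⟩ := hne
    exact disjoint_left.1 hdis (mem_verts.2 ⟨A, hA, hx⟩) (mem_verts.2 ⟨A, hA', hx⟩)
  have hcs := hun.card_le hs
  rw [card_union_of_disjoint hdM] at hcs
  have hks : k * (M1.card + M2.card) ≤ k * s := Nat.mul_le_mul_left _ hcs
  rw [mul_add] at hks
  rw [← hM1B]
  omega

/-- Number of edges meeting `B`, if every matching of such edges covers at most `c` of `B`. -/
lemma count_meeting {V : Finset ℕ} {F : Finset (Finset ℕ)} {k D c : ℕ}
    (hk : 2 ≤ k) (hF : F ⊆ powersetCard k V) (B : Finset ℕ)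
    (hB : ∀ v ∈ B, (F.filter (fun A => v ∈ A)).card ≤ D)
    (hc : ∀ M0, IsMatch F M0 → (∀ A ∈ M0, (A ∩ B).Nonempty) → (verts M0 ∩ B).card ≤ c) :
    (F.filter (fun A => (A ∩ B).Nonempty)).card ≤
      c * D + B.card * (k * c) * (V.card - 2).choose (k - 2) := by
  classical
  obtain ⟨M, hM, hmax⟩ : ∃ M, (IsMatch F M ∧ ∀ A ∈ M, (A ∩ B).Nonempty) ∧
      ∀ M', (IsMatch F M' ∧ ∀ A ∈ M', (A ∩ B).Nonempty) → M'.card ≤ M.card := by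
    have hne : (F.powerset.filter (fun M => IsMatch F M ∧ ∀ A ∈ M, (A ∩ B).Nonempty)).Nonempty :=
      ⟨∅, mem_filter.2 ⟨by simp, ⟨by simp, by simp⟩, by simp⟩⟩
    obtain ⟨M, hM, hmax⟩ := exists_max_image _ (fun M => M.card) hne
    refine ⟨M, (mem_filter.1 hM).2, fun M' hM' => hmax M' ?_⟩
    exact mem_filter.2 ⟨mem_powerset.2 hM'.1.1, hM'⟩
  have hFk : ∀ A ∈ F, A.card = k := fun A hA => (mem_powersetCard.1 (hF hA)).2
  have hMc := hc M hM.1 hM.2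
  have hMc2 := card_match_le_cover hM.1 (B := B) hM.2
  have hvc := hM.1.card_verts hFk
  have hsub : F.filter (fun A => (A ∩ B).Nonempty) ⊆
      ((verts M ∩ B).biUnion (fun v => F.filter (fun A => v ∈ A))) ∪
      ((powersetCard k V).filter (fun A => (∃ x ∈ B \ verts M, x ∈ A) ∧ (∃ y ∈ verts M, y ∈ A))) := by
    intro A hA
    rw [mem_filter] at hA
    obtain ⟨hAF, x, hx⟩ := hA
    rw [mem_inter] at hx
    rw [mem_union]
    by_cases hxM : x ∈ verts M
    · left
      rw [mem_biUnion]
      exact ⟨x, mem_inter.2 ⟨hxM, hx.2⟩, mem_filter.2 ⟨hAF, hx.1⟩⟩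
    · right
      refine mem_filter.2 ⟨hF hAF, ⟨x, mem_sdiff.2 ⟨hx.2, hxM⟩, hx.1⟩, ?_⟩
      by_contra hcon
      push Not at hcon
      have hd : Disjoint A (verts M) := by
        rw [disjoint_left]
        intro y hy hy'
        exact hcon y hy' hy
      have hAM : A ∉ M := fun h => hxM (mem_verts.2 ⟨A, h, hx.1⟩)
      have := hmax _ ⟨hM.1.insert hAF hd, by
        intro E hE
        rw [mem_insert] at hE
        rcases hE with rfl | hE
        · exact ⟨x, mem_inter.2 hx⟩
        · exact hM.2 E hE⟩
      rw [card_insert_of_notMem hAM] at this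
      omega
  refine (card_le_card hsub).trans ((card_union_le _ _).trans ?_)
  apply add_le_add
  · refine (card_biUnion_le_card_mul _ _ D ?_).trans (Nat.mul_le_mul_right _ hMc)
    intro v hv
    exact hB v (mem_inter.1 hv).2
  · refine (card_meet_two V _ _ k hk sdiff_disjoint).trans (Nat.mul_le_mul_right _ ?_)
    apply Nat.mul_le_mul (card_le_card sdiff_subset)
    rw [hvc]
    exact Nat.mul_le_mul_left _ (hMc2.trans hMc)

lemma choose_add_ge (x r j : ℕ) :
    x.choose (r + 1) + j * x.choose r ≤ (x + j).choose (r + 1) := by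
  induction j with
  | zero => simp
  | succ j ih =>
    rw [← add_assoc, Nat.choose_succ_succ' (x + j) r]
    have : x.choose r ≤ (x + j).choose r := Nat.choose_le_choose _ (by omega)
    rw [add_mul, one_mul]
    omega

lemma choose_add_le (x r j : ℕ) :
    (x + j).choose (r + 1) ≤ x.choose (r + 1) + j * (x + j - 1).choose r := by
  induction j with
  | zero => simp
  | succ j ih =>
    rw [← add_assoc, Nat.choose_succ_succ' (x + j) r]
    have : (x + j - 1).choose r ≤ (x + j).choose r := Nat.choose_le_choose _ (by omega)
    have h2 : j * (x + j - 1).choose r ≤ j * (x + j).choose r := Nat.mul_le_mul_left _ this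
    have h3 : x + j + 1 - 1 = x + j := by omega
    rw [h3, add_mul, one_mul]
    omega

/-- sets meeting a fixed set `X`. -/
lemma card_meet (G X : Finset ℕ) (l : ℕ) (hX : X ⊆ G) :
    ((powersetCard l G).filter (fun A => (A ∩ X).Nonempty)).card =
      G.card.choose l - (G.card - X.card).choose l := by
  have h1 : ((powersetCard l G).filter (fun A => ¬ (A ∩ X).Nonempty)) = powersetCard l (G \ X) := by
    ext A
    simp only [mem_filter, mem_powersetCard, not_nonempty_iff_eq_empty,
      ← disjoint_iff_inter_eq_empty, subset_sdiff]
    tauto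
  have h2 := card_filter_add_card_filter_not (s := powersetCard l G) (fun A => (A ∩ X).Nonempty)
  rw [h1, card_powersetCard, card_powersetCard, card_sdiff_of_subset hX] at h2
  omega

lemma choose_mul_pred (g l : ℕ) (hl : 2 ≤ l) (hg : 2 ≤ g) :
    (g - 1).choose (l - 1) * (l - 1) = (g - 1) * (g - 2).choose (l - 2) := by
  obtain ⟨g, rfl⟩ := Nat.exists_eq_add_of_le' hg
  obtain ⟨l, rfl⟩ := Nat.exists_eq_add_of_le' hl
  have := Nat.add_one_mul_choose_eq g l
  simp only [Nat.add_sub_cancel, show g + 2 - 1 = g + 1 by omega, show l + 2 - 1 = l + 1 by omega]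
  exact this.symm

/-- Weighted cross-intersecting inequality for large ground sets. -/
lemma cross_bound {G : Finset ℕ} {l t : ℕ} {P Q : Finset (Finset ℕ)} (hl : 2 ≤ l)
    (hg : 4 * l ^ 2 * (l - 1) + 2 ≤ G.card) (_ht : 1 ≤ t)
    (hP : P ⊆ powersetCard l G) (hQ : Q ⊆ powersetCard l G)
    (hcross : ∀ A ∈ P, ∀ B ∈ Q, (A ∩ B).Nonempty)
    (hQne : Q.Nonempty) (hQP : Q.card ≤ P.card) :
    P.card + t * Q.card ≤
      max (G.card.choose l - (G.card - l).choose l + t) ((t + 1) * (G.card - 1).choose (l - 1)) := by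
  set g := G.card with hgdef
  set p := (g - 1).choose (l - 1) with hp
  set a := (g - 2).choose (l - 2) with ha
  have hl2g : l + 2 ≤ g := by nlinarith [Nat.sub_add_cancel (show 1 ≤ l by omega)]
  have hpa : 4 * l ^ 2 * a ≤ p := by
    have h1 := choose_mul_pred g l hl (by omega)
    have h2 : 4 * l ^ 2 * (l - 1) * a ≤ (g - 1) * a := Nat.mul_le_mul_right _ (by omega)
    have h3 : (4 * l ^ 2 * a) * (l - 1) ≤ p * (l - 1) := by
      rw [hp, h1]; calc _ = 4 * l ^ 2 * (l - 1) * a := by ring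
        _ ≤ _ := h2
    exact Nat.le_of_mul_le_mul_right h3 (by omega)
  have hPl : ∀ A ∈ P, A ⊆ G ∧ A.card = l := fun A hA => mem_powersetCard.1 (hP hA)
  have hQl : ∀ A ∈ Q, A ⊆ G ∧ A.card = l := fun A hA => mem_powersetCard.1 (hQ hA)
  by_cases hQ1 : Q.card = 1
  · -- `Q` is a single set
    apply le_max_of_le_left
    rw [hQ1, mul_one]
    obtain ⟨B, hB⟩ := hQne
    have h1 : P ⊆ (powersetCard l G).filter (fun A => (A ∩ B).Nonempty) := by
      intro A hA
      exact mem_filter.2 ⟨hP hA, hcross A hA B hB⟩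
    have h2 := card_le_card h1
    rw [card_meet G B l (hQl B hB).1, (hQl B hB).2, ← hgdef] at h2
    omega
  have hQ2 : 1 < Q.card := by
    have := card_pos.2 hQne
    omega
  -- pair bound
  have hpair : ∀ B1 ∈ Q, ∀ B2 ∈ Q, B1 ≠ B2 → P.card ≤ (l - 1) * p + l ^ 2 * a := by
    intro B1 hB1 B2 hB2 hne
    have hi : (B1 ∩ B2).card ≤ l - 1 := by
      have hss : B1 ∩ B2 ⊂ B1 := by
        refine ssubset_of_subset_of_ne inter_subset_left ?_
        intro h
        have hsub : B1 ⊆ B2 := by rw [← h]; exact inter_subset_right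
        exact hne (eq_of_subset_of_card_le hsub (by rw [(hQl B1 hB1).2, (hQl B2 hB2).2]))
      have := card_lt_card hss
      rw [(hQl B1 hB1).2] at this
      omega
    have hsub : P ⊆ ((B1 ∩ B2).biUnion (fun v => (powersetCard l G).filter (fun A => v ∈ A))) ∪
        ((powersetCard l G).filter (fun A => (∃ x ∈ B1 \ B2, x ∈ A) ∧ (∃ y ∈ B2, y ∈ A))) := by
      intro A hA
      rw [mem_union]
      obtain ⟨x, hx⟩ := hcross A hA B1 hB1
      obtain ⟨y, hy⟩ := hcross A hA B2 hB2
      rw [mem_inter] at hx hy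
      by_cases hxB : x ∈ B2
      · left
        rw [mem_biUnion]
        exact ⟨x, mem_inter.2 ⟨hx.2, hxB⟩, mem_filter.2 ⟨hP hA, hx.1⟩⟩
      · right
        exact mem_filter.2 ⟨hP hA, ⟨x, mem_sdiff.2 ⟨hx.2, hxB⟩, hx.1⟩, y, hy.2, hy.1⟩
    refine (card_le_card hsub).trans ((card_union_le _ _).trans ?_)
    apply add_le_add
    · refine (card_biUnion_le_card_mul _ _ p ?_).trans (Nat.mul_le_mul_right _ hi)
      intro v _
      exact card_star_le G l v (by omega)
    · refine (card_meet_two G _ _ l hl sdiff_disjoint).trans (Nat.mul_le_mul_right _ ?_)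
      rw [pow_two]
      apply Nat.mul_le_mul
      · rw [← (hQl B1 hB1).2]; exact card_le_card sdiff_subset
      · rw [(hQl B2 hB2).2]
  by_cases hstar : ∃ x, ∀ B ∈ Q, x ∈ B
  · obtain ⟨x, hx⟩ := hstar
    by_cases hPx : ∀ A ∈ P, x ∈ A
    · apply le_max_of_le_right
      have h1 : P.card ≤ p := by
        refine le_trans (card_le_card ?_) (card_star_le G l x (by omega))
        intro A hA
        exact mem_filter.2 ⟨hP hA, hPx A hA⟩
      have h2 : t * Q.card ≤ t * p := Nat.mul_le_mul_left _ (hQP.trans h1)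
      rw [add_mul, one_mul]
      omega
    · push Not at hPx
      obtain ⟨A0, hA0, hxA0⟩ := hPx
      have hQc : Q.card ≤ l * a := by
        have h1 := card_meet_two G {x} A0 l hl (by simpa using hxA0)
        rw [card_singleton, one_mul, (hPl A0 hA0).2] at h1
        refine le_trans (card_le_card ?_) h1
        intro B hB
        obtain ⟨y, hy⟩ := hcross A0 hA0 B hB
        rw [mem_inter] at hy
        exact mem_filter.2 ⟨hQ hB, ⟨x, by simp, hx B hB⟩, y, hy.1, hy.2⟩
      obtain ⟨B1, hB1, B2, hB2, hne⟩ := one_lt_card.1 hQ2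
      have hPc := hpair B1 hB1 B2 hB2 hne
      have htQ : t * Q.card ≤ t * (l * a) := Nat.mul_le_mul_left _ hQc
      obtain ⟨l', rfl⟩ : ∃ l', l = l' + 1 := ⟨l - 1, by omega⟩
      simp only [Nat.add_sub_cancel] at *
      by_cases htl : l' + 1 ≤ t
      · apply le_max_of_le_right
        obtain ⟨j, rfl⟩ := Nat.exists_eq_add_of_le htl
        have h1 : (j + 2) * (4 * (l' + 1) ^ 2 * a) ≤ (j + 2) * p := Nat.mul_le_mul_left _ hpa
        have h2 : (l' + 1) ^ 2 * a + (l' + 1 + j) * ((l' + 1) * a) ≤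
            (j + 2) * (4 * (l' + 1) ^ 2 * a) := by
          have : (l' + 1) ^ 2 + (l' + 1 + j) * (l' + 1) ≤ (j + 2) * (4 * (l' + 1) ^ 2) := by
            nlinarith [Nat.zero_le j, Nat.zero_le l', Nat.zero_le (j * l'), Nat.zero_le (j * l' ^ 2)]
          calc _ = ((l' + 1) ^ 2 + (l' + 1 + j) * (l' + 1)) * a := by ring
            _ ≤ ((j + 2) * (4 * (l' + 1) ^ 2)) * a := Nat.mul_le_mul_right _ this
            _ = _ := by ring
        calc _ ≤ l' * p + (l' + 1) ^ 2 * a + (l' + 1 + j) * ((l' + 1) * a) := by omega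
          _ ≤ l' * p + (j + 2) * p := by omega
          _ = _ := by ring
      · apply le_max_of_le_left
        have htl' : t ≤ l' + 1 := by omega
        have h1 : t * ((l' + 1) * a) ≤ (l' + 1) * ((l' + 1) * a) := Nat.mul_le_mul_right _ htl'
        have h2 := choose_add_ge (g - (l' + 1)) l' (l' + 1)
        rw [Nat.sub_add_cancel (by omega)] at h2
        have h3 := choose_add_le (g - (l' + 1)) (l' - 1) l'
        rw [show g - (l' + 1) + l' = g - 1 by omega, show l' - 1 + 1 = l' by omega,
          show g - 1 - 1 = g - 2 by omega] at h3
        have ha' : (g - 2).choose (l' - 1) = a := by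
          rw [ha]; congr 1
        rw [ha'] at h3
        have h4 : (l' + 1) * p ≤ (l' + 1) * ((g - (l' + 1)).choose l' + l' * a) :=
          Nat.mul_le_mul_left _ h3
        have h5 : (l' + 1) * (l' * a) ≤ (l' + 1) ^ 2 * a := by
          nlinarith [Nat.zero_le (l' * a), Nat.zero_le a]
        have h6 : (l' + 1) * ((l' + 1) * a) = (l' + 1) ^ 2 * a := by ring
        rw [mul_add] at h4
        have h7 : (l' + 1) * p = l' * p + p := by ring
        have h8 : 4 * (l' + 1) ^ 2 * a = 4 * ((l' + 1) ^ 2 * a) := by ring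
        omega
  · -- no common point
    push Not at hstar
    apply le_max_of_le_right
    obtain ⟨B0, hB0⟩ := hQne
    choose f hf hf' using hstar
    have h1 : P.card ≤ l ^ 2 * a := by
      have hsub : P ⊆ B0.biUnion (fun x => (powersetCard l G).filter
          (fun A => (∃ z ∈ ({x} : Finset ℕ), z ∈ A) ∧ (∃ y ∈ f x, y ∈ A))) := by
        intro A hA
        obtain ⟨x, hx⟩ := hcross A hA B0 hB0
        obtain ⟨y, hy⟩ := hcross A hA (f x) (hf x)
        rw [mem_inter] at hx hy
        rw [mem_biUnion]
        exact ⟨x, hx.2, mem_filter.2 ⟨hP hA, ⟨x, by simp, hx.1⟩, y, hy.2, hy.1⟩⟩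
      refine (card_le_card hsub).trans ((card_biUnion_le_card_mul _ _ (l * a) ?_).trans ?_)
      · intro x _
        have h1 := card_meet_two G {x} (f x) l hl (by simpa using hf' x)
        rwa [card_singleton, one_mul, (hQl (f x) (hf x)).2] at h1
      · rw [(hQl B0 hB0).2, pow_two, mul_assoc]
    have h2 : P.card ≤ p := by
      have : 4 * l ^ 2 * a = 4 * (l ^ 2 * a) := by ring
      omega
    have h3 : t * Q.card ≤ t * p := Nat.mul_le_mul_left _ (hQP.trans h2)
    rw [add_mul, one_mul]
    omega

lemma mem_filter_inst {p : Finset ℕ → Prop} {inst : DecidablePred p} {S : Finset (Finset ℕ)}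
    {A : Finset ℕ} : A ∈ @Finset.filter _ p inst S ↔ A ∈ S ∧ p A := mem_filter

lemma insert_inj_aux {g x x' : ℕ} {T T' : Finset ℕ} (hT : T ⊆ Icc 1 g) (hT' : T' ⊆ Icc 1 g)
    (hx : g < x) (hx' : g < x') (h : insert x T = insert x' T') : x = x' ∧ T = T' := by
  have hxT : x ∉ T := fun h => by have := mem_Icc.1 (hT h); omega
  have hxT' : x ∉ T' := fun h => by have := mem_Icc.1 (hT' h); omega
  have h1 : x ∈ insert x' T' := h ▸ mem_insert_self x T
  rw [mem_insert] at h1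
  have hxx : x = x' := by tauto
  subst hxx
  refine ⟨rfl, ?_⟩
  rw [← erase_insert hxT, h, erase_insert hxT']

lemma insert_sdiff_aux {g x : ℕ} {T : Finset ℕ} (hT : T ⊆ Icc 1 g) (hx : g < x) :
    (insert x T) \ Icc 1 g = {x} := by
  ext y
  simp only [mem_sdiff, mem_insert, mem_singleton]
  constructor
  · rintro ⟨rfl | h, h2⟩
    · rfl
    · exact absurd (hT h) h2
  · rintro rfl
    refine ⟨Or.inl rfl, fun h => ?_⟩
    have := (mem_Icc.1 h).2
    omega

lemma insert_mem_aux {g n k x : ℕ} {T : Finset ℕ} (hk : 1 ≤ k) (hT : T ∈ powersetCard (k - 1) (Icc 1 g))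
    (hx : g < x) (hxn : x ≤ n) : insert x T ∈ powersetCard k (Icc 1 n) := by
  rw [mem_powersetCard] at hT ⊢
  have hxT : x ∉ T := fun h => by have := mem_Icc.1 (hT.1 h); omega
  constructor
  · apply insert_subset (mem_Icc.2 ⟨by omega, hxn⟩)
    exact hT.1.trans (Icc_subset_Icc_right (by omega))
  · rw [card_insert_of_notMem hxT]; omega

lemma card_E1_ge (n k s : ℕ) (hk : 3 ≤ k) (hs : 1 ≤ s) :
    (k * s + k - 2).choose k + (n - (k * s + k - 2)) * (k * s + k - 2 - 1).choose (k - 1 - 1) ≤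
      (E1 n k s).card := by
  classical
  have hks : k ≤ k * s := Nat.le_mul_of_pos_right k hs
  unfold E1
  have hg1 : k * s + k - 1 = k * s + k - 2 + 1 := by omega
  rw [hg1]
  set g := k * s + k - 2 with hg
  rw [card_union_of_disjoint, card_powersetCard, Nat.card_Icc, Nat.add_sub_cancel]
  · apply Nat.add_le_add_left
    have h1 := card_star (Icc 1 g) (k - 1) 1 (by omega) (mem_Icc.2 ⟨le_rfl, by omega⟩)
    rw [Nat.card_Icc, Nat.add_sub_cancel] at h1
    have h2 : (Icc (g + 1) n ×ˢ ((powersetCard (k - 1) (Icc 1 g)).filter (fun A => 1 ∈ A))).card =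
        (n - g) * (g - 1).choose (k - 1 - 1) := by
      rw [card_product, h1, Nat.card_Icc]
      congr 1
      omega
    rw [← h2]
    apply card_le_card_of_injOn (fun p => insert p.1 p.2)
    · rintro ⟨x, T⟩ hp
      rw [mem_coe, mem_product, mem_filter, mem_Icc] at hp
      obtain ⟨hx, hT, h1T⟩ := hp
      simp only at hx hT h1T
      rw [mem_coe]
      refine mem_filter_inst.2 ⟨insert_mem_aux (by omega) hT (by omega) hx.2,
        mem_insert_of_mem h1T, x, mem_Icc.2 hx,
        insert_sdiff_aux (mem_powersetCard.1 hT).1 (by omega)⟩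
    · rintro ⟨x, T⟩ hp ⟨x', T'⟩ hp' h
      rw [mem_coe, mem_product, mem_filter, mem_Icc] at hp hp'
      simp only at hp hp' h
      have := insert_inj_aux (mem_powersetCard.1 hp.2.1).1 (mem_powersetCard.1 hp'.2.1).1
        (by omega) (by omega) h
      rw [this.1, this.2]
  · rw [disjoint_left]
    intro A hA hA'
    obtain ⟨-, -, x, -, hx⟩ := mem_filter_inst.1 hA'
    have h2 : A \ Icc 1 g = ∅ := sdiff_eq_empty_iff_subset.2 (mem_powersetCard.1 hA).1
    rw [h2] at hx
    exact (singleton_ne_empty x) hx.symm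

lemma card_E0_ge (n k s : ℕ) (hk : 3 ≤ k) (hs : 1 ≤ s) (hn : k * s + k ≤ n) :
    (k * s + k - 2).choose k + ((k * s + k - 2).choose (k - 1) -
      (k * s + k - 2 - (k - 1)).choose (k - 1) + (n - (k * s + k - 2) - 1)) ≤
      (E0 n k s).card := by
  classical
  have hks : k ≤ k * s := Nat.le_mul_of_pos_right k hs
  unfold E0
  have hg1 : k * s + k - 1 = k * s + k - 2 + 1 := by omega
  have hg2 : k * s + k = k * s + k - 2 + 2 := by omega
  rw [hg1]
  set g := k * s + k - 2 with hg
  rw [hg2]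
  have hsub : Icc 1 (k - 1) ⊆ Icc 1 g := Icc_subset_Icc_right (by omega)
  rw [card_union_of_disjoint, card_union_of_disjoint, card_powersetCard, Nat.card_Icc,
    Nat.add_sub_cancel, add_assoc]
  · apply Nat.add_le_add_left
    apply add_le_add
    · have h1 := card_meet (Icc 1 g) (Icc 1 (k - 1)) (k - 1) hsub
      simp only [Nat.card_Icc, Nat.add_sub_cancel] at h1
      rw [← h1]
      apply card_le_card_of_injOn (fun T => insert (g + 1) T)
      · intro T hT
        have hT := mem_filter.1 hT
        refine mem_coe.2 (mem_filter.2 ⟨insert_mem_aux (by omega) hT.1 (by omega) (by omega),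
          insert_sdiff_aux (mem_powersetCard.1 hT.1).1 (by omega), ?_⟩)
        obtain ⟨y, hy⟩ := hT.2
        rw [mem_inter] at hy
        exact ⟨y, mem_inter.2 ⟨mem_insert_of_mem hy.1, hy.2⟩⟩
      · intro T hT T' hT' h
        have hT := mem_filter.1 hT
        have hT' := mem_filter.1 hT'
        exact (insert_inj_aux (mem_powersetCard.1 hT.1).1 (mem_powersetCard.1 hT'.1).1
          (by omega) (by omega) h).2
    · rw [card_image_of_injOn, Nat.card_Icc]
      · omega
      · intro x hx x' hx' h
        rw [mem_coe, mem_Icc] at hx hx'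
        exact (insert_inj_aux hsub hsub (by omega) (by omega) h).1
  · rw [disjoint_left]
    intro A hA hA'
    have hx := (mem_filter.1 hA').2.1
    have h2 : A \ Icc 1 g = ∅ := sdiff_eq_empty_iff_subset.2 (mem_powersetCard.1 hA).1
    rw [h2] at hx
    exact (singleton_ne_empty _) hx.symm
  · rw [disjoint_left]
    intro A hA hA'
    rw [mem_image] at hA'
    obtain ⟨x, hx, rfl⟩ := hA'
    rw [mem_Icc] at hx
    have h3 := insert_sdiff_aux hsub (show g < x by omega)
    rw [mem_union] at hA
    rcases hA with hA | hA
    · rw [sdiff_eq_empty_iff_subset.2 (mem_powersetCard.1 hA).1] at h3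
      exact (singleton_ne_empty _) h3.symm
    · have h4 := (mem_filter.1 hA).2.1
      rw [h3, singleton_inj] at h4
      omega

lemma card_nbr (F : Finset (Finset ℕ)) (v : ℕ) :
    (nbr F v).card = (F.filter (fun A => v ∈ A)).card := by
  unfold nbr
  apply card_image_of_injOn
  intro A hA A' hA' h
  have hA := (mem_filter.1 hA).2
  have hA' := (mem_filter.1 hA').2
  simp only at h
  rw [← insert_erase hA, h, insert_erase hA']

lemma case_one {V : Finset ℕ} {F : Finset (Finset ℕ)} {k t : ℕ} (hk : 3 ≤ k)
    (hF : F ⊆ powersetCard k V) (B : Finset ℕ) (hBV : B ⊆ V) (hBc : B.card = t + 1) (ht : 1 ≤ t)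
    (hg : 4 * (k - 1) ^ 2 * (k - 1 - 1) + 2 ≤ (V \ B).card)
    (hc : ∀ M0, IsMatch F M0 → (∀ A ∈ M0, (A ∩ B).Nonempty) → (verts M0 ∩ B).card ≤ 1) :
    (∃ W ⊆ V, W.card = (V \ B).card + 1 ∧ ∀ A ∈ F, A ⊆ W) ∨
    F.card ≤ (V \ B).card.choose k +
      max ((V \ B).card.choose (k - 1) - ((V \ B).card - (k - 1)).choose (k - 1) + t)
        ((t + 1) * ((V \ B).card - 1).choose (k - 1 - 1)) := by
  classical
  set G := V \ B with hG
  have hone : ∀ A ∈ F, ∀ v ∈ A, ∀ w ∈ A, v ∈ B → w ∈ B → v = w := by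
    intro A hA v hv w hw hvB hwB
    have h1 : IsMatch F {A} := ⟨by simpa using hA, by simp⟩
    have h2 := hc {A} h1 (by
      intro A' hA'
      rw [mem_singleton] at hA'
      subst hA'
      exact ⟨v, mem_inter.2 ⟨hv, hvB⟩⟩)
    have h3 : verts {A} = A := by simp [verts]
    rw [h3] at h2
    exact card_le_one.1 h2 v (mem_inter.2 ⟨hv, hvB⟩) w (mem_inter.2 ⟨hw, hwB⟩)
  have hnbr : ∀ v ∈ B, nbr F v ⊆ powersetCard (k - 1) G := by
    intro v hv T hT
    unfold nbr at hT
    rw [mem_image] at hT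
    obtain ⟨A, hA, rfl⟩ := hT
    rw [mem_filter] at hA
    have hAk := mem_powersetCard.1 (hF hA.1)
    rw [mem_powersetCard, card_erase_of_mem hA.2, hAk.2]
    refine ⟨?_, rfl⟩
    intro x hx
    rw [mem_erase] at hx
    refine mem_sdiff.2 ⟨hAk.1 hx.2, fun hxB => hx.1 (hone A hA.1 x hx.2 v hA.2 hxB hv)⟩
  have hcross : ∀ v ∈ B, ∀ w ∈ B, v ≠ w → ∀ S ∈ nbr F v, ∀ T ∈ nbr F w, (S ∩ T).Nonempty := by
    intro v hv w hw hvw S hS T hT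
    unfold nbr at hS hT
    rw [mem_image] at hS hT
    obtain ⟨A, hA, rfl⟩ := hS
    obtain ⟨A', hA', rfl⟩ := hT
    rw [mem_filter] at hA hA'
    by_contra hcon
    rw [not_nonempty_iff_eq_empty, ← disjoint_iff_inter_eq_empty, disjoint_left] at hcon
    have hd : Disjoint A A' := by
      rw [disjoint_left]
      intro z hz hz'
      by_cases hzB : z ∈ B
      · exact hvw ((hone A hA.1 v hA.2 z hz hv hzB).trans (hone A' hA'.1 z hz' w hA'.2 hzB hw))
      · exact hcon (mem_erase.2 ⟨fun (h : z = v) => hzB (h ▸ hv), hz⟩)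
          (mem_erase.2 ⟨fun (h : z = w) => hzB (h ▸ hw), hz'⟩)
    have h1 : IsMatch F {A'} := ⟨by simpa using hA'.1, by simp⟩
    have h3 : verts {A'} = A' := by simp [verts]
    have h4 := h1.insert hA.1 (by rw [h3]; exact hd)
    have h5 := hc _ h4 (by
      intro E hE
      rw [mem_insert, mem_singleton] at hE
      rcases hE with rfl | rfl
      · exact ⟨v, mem_inter.2 ⟨hA.2, hv⟩⟩
      · exact ⟨w, mem_inter.2 ⟨hA'.2, hw⟩⟩)
    rw [verts_insert, h3] at h5
    exact hvw (card_le_one.1 h5 v (mem_inter.2 ⟨mem_union_left _ hA.2, hv⟩) w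
      (mem_inter.2 ⟨mem_union_right _ hA'.2, hw⟩))
  obtain ⟨v1, hv1, hmax1⟩ := exists_max_image B (fun v => (nbr F v).card)
    (card_pos.1 (by omega))
  have hec : (B.erase v1).card = t := by rw [card_erase_of_mem hv1]; omega
  obtain ⟨v2, hv2, hmax2⟩ := exists_max_image (B.erase v1) (fun v => (nbr F v).card)
    (card_pos.1 (by omega))
  have hv2' := mem_erase.1 hv2
  by_cases hne : (nbr F v2).Nonempty
  · right
    have hX := cross_bound (G := G) (l := k - 1) (t := t) (P := nbr F v1) (Q := nbr F v2)
      (by omega) hg ht (hnbr v1 hv1) (hnbr v2 hv2'.2)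
      (hcross v1 hv1 v2 hv2'.2 hv2'.1.symm) hne (hmax1 v2 hv2'.2)
    have hsub : F ⊆ powersetCard k G ∪ B.biUnion (fun v => F.filter (fun A => v ∈ A)) := by
      intro A hA
      rw [mem_union]
      by_cases h : ∃ v ∈ B, v ∈ A
      · right
        obtain ⟨v, hv, hvA⟩ := h
        exact mem_biUnion.2 ⟨v, hv, mem_filter.2 ⟨hA, hvA⟩⟩
      · left
        have hAk := mem_powersetCard.1 (hF hA)
        refine mem_powersetCard.2 ⟨fun x hx => mem_sdiff.2 ⟨hAk.1 hx, fun hxB => h ⟨x, hxB, hx⟩⟩, hAk.2⟩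
    refine (card_le_card hsub).trans ((card_union_le _ _).trans ?_)
    rw [card_powersetCard]
    apply Nat.add_le_add_left
    refine le_trans card_biUnion_le (le_trans ?_ hX)
    simp only [← card_nbr]
    rw [← add_sum_erase B _ hv1]
    apply Nat.add_le_add_left
    rw [← hec, ← smul_eq_mul]
    exact sum_le_card_nsmul _ _ _ hmax2
  · left
    refine ⟨insert v1 G, insert_subset (hBV hv1) sdiff_subset, ?_, ?_⟩
    · rw [card_insert_of_notMem]
      intro h
      exact (mem_sdiff.1 h).2 hv1
    · intro A hA x hx
      rw [mem_insert]
      by_cases hxB : x ∈ B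
      · left
        by_contra hxv
        have h1 := hmax2 x (mem_erase.2 ⟨hxv, hxB⟩)
        rw [not_nonempty_iff_eq_empty] at hne
        simp only [hne, card_empty, card_nbr] at h1
        have : 0 < (F.filter (fun A => x ∈ A)).card := card_pos.2 ⟨A, mem_filter.2 ⟨hA, hx⟩⟩
        omega
      · right
        exact mem_sdiff.2 ⟨(mem_powersetCard.1 (hF hA)).1 hx, hxB⟩

lemma sum_miss_le {V L : Finset ℕ} {F : Finset (Finset ℕ)} {k : ℕ}
    (hF : F ⊆ powersetCard k V) :
    ∑ v ∈ L, ((powersetCard k V).filter (fun A => v ∈ A ∧ A ∉ F)).card ≤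
      k * (V.card.choose k - F.card) := by
  have h1 : ∀ v, (powersetCard k V).filter (fun A => v ∈ A ∧ A ∉ F) =
      (powersetCard k V \ F).filter (fun A => v ∈ A) := by
    intro v
    ext A
    simp only [mem_filter, mem_sdiff]
    tauto
  have h2 : (powersetCard k V \ F).card = V.card.choose k - F.card := by
    rw [card_sdiff_of_subset hF, card_powersetCard]
  rw [← h2, sum_congr rfl (fun v _ => by rw [h1 v])]
  simp only [card_filter]
  rw [sum_comm, mul_comm, ← smul_eq_mul]
  apply sum_le_card_nsmul
  intro A hA
  rw [← card_filter]
  rw [mem_sdiff, mem_powersetCard] at hA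
  rw [← hA.1.2]
  apply card_le_card
  intro x hx
  exact (mem_filter.1 hx).2

lemma choose_ratio (n k q : ℕ) (hq : n ≤ 8 * k * (q + 1 - (k - 1))) :
    (n - 1).choose (k - 1) ≤ (8 * k) ^ (k - 1) * q.choose (k - 1) := by
  set r := k - 1 with hr
  have h1 := Nat.pow_sub_le_descFactorial q r
  have h2 := Nat.descFactorial_le_pow (n - 1) r
  rw [Nat.descFactorial_eq_factorial_mul_choose] at h1 h2
  have h3 : (n - 1) ^ r ≤ (8 * k * (q + 1 - r)) ^ r := Nat.pow_le_pow_left (by omega) r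
  rw [mul_pow] at h3
  have h4 : r.factorial * (n - 1).choose r ≤ r.factorial * ((8 * k) ^ r * q.choose r) := by
    calc _ ≤ (n - 1) ^ r := h2
      _ ≤ _ := h3
      _ ≤ (8 * k) ^ r * (r.factorial * q.choose r) := Nat.mul_le_mul_left _ h1
      _ = _ := by ring
  exact Nat.le_of_mul_le_mul_left h4 (Nat.factorial_pos r)

set_option maxHeartbeats 1000000 in
lemma main_nat (k : ℕ) (hk : 3 ≤ k) (n s : ℕ) (hs : 8 * k ^ 3 < s) (hn : k * s + k ≤ n)
    (hm : 2 * (k + 1) * k * k * (8 * k) ^ k * (8 * k) ^ k * (n - (k * s + k - 2)) ≤ n - 1)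
    (F : Finset (Finset ℕ)) (hF : F ⊆ powersetCard k (Icc 1 n)) (hν : matchingNumber F ≤ s)
    (hcard : max (E0 n k s).card (E1 n k s).card < F.card) :
    ∃ W ⊆ Icc 1 n, W.card = k * s + k - 1 ∧ ∀ A ∈ F, A ⊆ W := by
  have hE0 := card_E0_ge n k s hk (by omega) hn
  have hE1 := card_E1_ge n k s hk (by omega)
  rw [max_lt_iff] at hcard
  set g := k * s + k - 2 with hg
  set m := n - g with hmdef
  have hks : s ≤ k * s := Nat.le_mul_of_pos_left s (by omega)
  have hgm : g + m = n := by omega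
  have hm2 : 2 ≤ m := by omega
  set V := Icc 1 n with hV
  have hVc : V.card = n := by simp [hV]
  set R := (8 * k) ^ k with hR
  have hRpos : 0 < R := by positivity
  set full := (n - 1).choose (k - 1) with hfull
  set D := full / R with hD
  set q := n / (4 * k) with hq
  set P := q.choose (k - 1) with hP
  set a := (n - 2).choose (k - 2) with ha
  have hk3 : 8 * k ^ 2 ≤ 8 * k ^ 3 := by
    have := Nat.pow_le_pow_right (show 0 < k by omega) (show 2 ≤ 3 by omega)
    omega
  have hn8 : 8 * k ^ 2 ≤ n := by omega
  have h4q : n < 4 * k * (q + 1) := by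
    rw [hq]; exact Nat.lt_mul_div_succ n (by omega)
  have hqn : 4 * k * q ≤ n := by
    rw [hq]; exact Nat.mul_div_le n (4 * k)
  have hqk : k ≤ q := by
    rw [hq, Nat.le_div_iff_mul_le (by omega)]
    nlinarith
  have hratio : full ≤ (8 * k) ^ (k - 1) * P := by
    apply choose_ratio
    obtain ⟨k', rfl⟩ : ∃ k', k = k' + 1 := ⟨k - 1, by omega⟩
    obtain ⟨q', hq'⟩ := Nat.exists_eq_add_of_le hqk
    rw [hq'] at h4q ⊢
    rw [show k' + 1 + q' + 1 - (k' + 1 - 1) = q' + 2 by omega]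
    nlinarith
  have hPpos : 0 < P := Nat.choose_pos (by omega)
  have hDP : 8 * k * D ≤ P := by
    have h1 : D * R ≤ full := Nat.div_mul_le_self _ _
    have h2 : R = (8 * k) ^ (k - 1) * (8 * k) := by
      rw [hR, ← pow_succ]; congr 1; omega
    have h3 : (8 * k) ^ (k - 1) * (8 * k * D) ≤ (8 * k) ^ (k - 1) * P := by
      calc _ = D * R := by rw [h2]; ring
        _ ≤ _ := h1.trans hratio
    exact Nat.le_of_mul_le_mul_left h3 (by positivity)
  have h24D : 24 * D ≤ 8 * k * D := Nat.mul_le_mul_right _ (by omega)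
  have hqn1 : q ≤ n - 1 := by
    have : 2 * q ≤ 4 * k * q := Nat.mul_le_mul_right _ (by omega)
    omega
  have hfullP : P ≤ full := Nat.choose_le_choose _ hqn1
  have hFC : F.card ≤ n.choose k := by
    have := card_le_card hF
    rwa [card_powersetCard, hVc] at this
  -- number of missing vertices
  set L := missV V F k D with hL
  have hLc : L.card ≤ k * m * R := by
    have h1 : L.card * (D + 1) ≤ k * (n.choose k - F.card) := by
      have h2 := sum_miss_le (L := L) hF
      rw [hVc] at h2
      refine le_trans ?_ h2
      rw [← smul_eq_mul]
      apply card_nsmul_le_sum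
      intro v hv
      exact (mem_filter.1 hv).2
    have h2 : n.choose k - F.card ≤ m * full := by
      have h3 := choose_add_le g (k - 1) m
      rw [hgm, Nat.sub_add_cancel (show 1 ≤ k by omega), ← hfull] at h3
      omega
    have h3 : full ≤ R * (D + 1) := (Nat.lt_mul_div_succ full hRpos).le
    have h4 : L.card * (D + 1) ≤ (k * m * R) * (D + 1) := by
      calc _ ≤ k * (m * full) := h1.trans (Nat.mul_le_mul_left _ h2)
        _ ≤ k * (m * (R * (D + 1))) := by gcongr
        _ = _ := by ring
    exact Nat.le_of_mul_le_mul_right h4 (by omega)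
  have hLa : (k + 1) * L.card * a ≤ D := by
    rw [hD, Nat.le_div_iff_mul_le hRpos]
    have h1 := choose_mul_pred n k (by omega) (by omega)
    have h2 : ((k + 1) * L.card * a * R) * (k - 1) ≤ full * (k - 1) := by
      rw [hfull, h1]
      calc _ ≤ (k + 1) * (k * m * R) * a * R * (2 * k) := by
            gcongr
            omega
        _ = 2 * (k + 1) * k * k * R * R * m * a := by ring
        _ ≤ (n - 1) * a := Nat.mul_le_mul_right _ hm
    exact Nat.le_of_mul_le_mul_right h2 (by omega)
  have hLn : 2 * ((k + 1) * L.card) ≤ n := by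
    calc _ ≤ 2 * ((k + 1) * (k * m * R)) := by gcongr
      _ = 2 * (k + 1) * k * R * m * 1 := by ring
      _ ≤ 2 * (k + 1) * k * R * m * (k * R) := by
          apply Nat.mul_le_mul_left
          exact Nat.mul_pos (by omega) hRpos
      _ = 2 * (k + 1) * k * k * R * R * m := by ring
      _ ≤ n - 1 := hm
      _ ≤ n := by omega
  have h2kq : 2 * k * q + (k + 1) * L.card ≤ n := by
    have : 4 * k * q = 2 * (2 * k * q) := by ring
    omega
  have hkD : k * D < P := by
    have : 8 * k * D = 8 * (k * D) := by ring
    omega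
  have hD2 : 2 * D < full := by omega
  have hcov := fun M0 => cover_bound (V := V) (F := F) (k := k) (D := D) (q := q) (s := s)
    (by omega) hF hν (by rw [hVc]; exact hD2) (by rw [hVc]; exact hLa)
    (by rw [hVc]; exact h2kq) hkD M0
  have hBL := lowV_subset_missV (V := V) (F := F) (k := k) (D := D) (by omega) hF
    (by rw [hVc]; exact hD2)
  set B := lowV V F D with hB
  rw [hVc] at hcov
  have hBV : B ⊆ V := filter_subset _ _
  have hBLc : B.card ≤ L.card := card_le_card hBL
  have hBn : B.card ≤ n := hVc ▸ card_le_card hBV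
  have hGc : (V \ B).card = n - B.card := by rw [card_sdiff_of_subset hBV, hVc]
  have h0 := hcov ∅ ⟨by simp, by simp⟩ (by simp)
  simp only [verts, biUnion_empty, empty_inter, card_empty] at h0
  obtain ⟨c, hc⟩ : ∃ c, n + c = B.card + (g + 1) := ⟨B.card + (g + 1) - n, by omega⟩
  have hcov' : ∀ M0, IsMatch F M0 → (∀ A ∈ M0, (A ∩ B).Nonempty) → (verts M0 ∩ B).card ≤ c := by
    intro M0 h1 h2
    have := hcov M0 h1 h2
    omega
  rcases Nat.lt_or_ge c 1 with hc0 | hc1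
  · -- no edge meets `B`
    refine ⟨V \ B, sdiff_subset, by omega, ?_⟩
    intro A hA x hx
    refine mem_sdiff.2 ⟨(mem_powersetCard.1 (hF hA)).1 hx, fun hxB => ?_⟩
    have h1 : IsMatch F {A} := ⟨by simpa using hA, by simp⟩
    have h2 := hcov' {A} h1 (by
      intro A' hA'
      rw [mem_singleton] at hA'
      subst hA'
      exact ⟨x, mem_inter.2 ⟨hx, hxB⟩⟩)
    have h3 : verts {A} = A := by simp [verts]
    rw [h3] at h2
    have : 0 < (A ∩ B).card := card_pos.2 ⟨x, mem_inter.2 ⟨hx, hxB⟩⟩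
    omega
  rcases Nat.lt_or_ge c 2 with hc2 | hc2
  · have hc1' : c = 1 := by omega
    subst hc1'
    have hGg : (V \ B).card = g := by omega
    have hmain := case_one (t := m - 1) hk hF B hBV (by omega) (by omega)
      (by
        rw [hGg]
        have : 4 * (k - 1) ^ 2 * (k - 1 - 1) ≤ 4 * k ^ 2 * k := by
          exact Nat.mul_le_mul (Nat.mul_le_mul_left _ (Nat.pow_le_pow_left (by omega) 2)) (by omega)
        have h3 : 4 * k ^ 2 * k = 4 * k ^ 3 := by ring
        have h4 : 0 < k ^ 3 := by positivity
        omega) hcov'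
    rw [hGg] at hmain
    rcases hmain with ⟨W, hWV, hWc, hW⟩ | hle
    · exact ⟨W, hWV, by omega, hW⟩
    · exfalso
      rw [Nat.sub_add_cancel (show 1 ≤ m by omega)] at hle
      rcases max_choice (g.choose (k - 1) - (g - (k - 1)).choose (k - 1) + (m - 1))
        (m * (g - 1).choose (k - 1 - 1)) with h | h
      · rw [h] at hle; omega
      · rw [h] at hle; omega
  · exfalso
    obtain ⟨d, rfl⟩ : ∃ d, c = d + 1 := ⟨c - 1, by omega⟩
    have h1 := count_meeting (by omega) hF B (D := D) (fun v hv => (mem_filter.1 hv).2) hcov'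
    rw [hVc] at h1
    have h2 : F.card ≤ (V \ B).card.choose k + (F.filter (fun A => (A ∩ B).Nonempty)).card := by
      have hsub : F ⊆ powersetCard k (V \ B) ∪ F.filter (fun A => (A ∩ B).Nonempty) := by
        intro A hA
        rw [mem_union]
        by_cases h : (A ∩ B).Nonempty
        · exact Or.inr (mem_filter.2 ⟨hA, h⟩)
        · left
          have hAk := mem_powersetCard.1 (hF hA)
          refine mem_powersetCard.2 ⟨fun x hx => mem_sdiff.2 ⟨hAk.1 hx, fun hxB =>
            h ⟨x, mem_inter.2 ⟨hx, hxB⟩⟩⟩, hAk.2⟩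
      have := (card_le_card hsub).trans (card_union_le _ _)
      rwa [card_powersetCard] at this
    have h3 := choose_add_ge (V \ B).card (k - 1) d
    rw [Nat.sub_add_cancel (show 1 ≤ k by omega), show (V \ B).card + d = g by omega] at h3
    have hLk : L.card ≤ (k + 1) * L.card := Nat.le_mul_of_pos_left _ (by omega)
    have hqq : q ≤ 2 * k * q := Nat.le_mul_of_pos_left _ (by omega)
    have h4 : P ≤ (V \ B).card.choose (k - 1) := Nat.choose_le_choose _ (by omega)
    have h5 : d * P ≤ d * (V \ B).card.choose (k - 1) := Nat.mul_le_mul_left _ h4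
    have h6 : B.card * (k * (d + 1)) * a ≤ (d + 1) * D := by
      calc _ ≤ L.card * ((k + 1) * (d + 1)) * a := by gcongr; omega
        _ = (d + 1) * ((k + 1) * L.card * a) := by ring
        _ ≤ _ := Nat.mul_le_mul_left _ hLa
    have h7 : d * (24 * D) ≤ d * P := Nat.mul_le_mul_left _ (by omega)
    have h8 : D ≤ d * D := Nat.le_mul_of_pos_left _ (by omega)
    have h9 : d * (24 * D) = 24 * (d * D) := by ring
    have h10 : (d + 1) * D = d * D + D := by ring
    rw [← ha] at h1
    omega

/-- stability; a dense family is contained in a clique of size `ks+k-1`. -/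
theorem stmt2 (k : ℕ) (hk : 3 ≤ k) :
    ∃ (β : ℝ) (s₀ : ℕ), 0 < β ∧ 0 < s₀ ∧
      ∀ (n s : ℕ), s₀ < s → k * s + k ≤ n → (n : ℝ) ≤ (1 + β) * (k * s) + k - 2 →
        ∀ F ⊆ Finset.powersetCard k (Finset.Icc 1 n),
          matchingNumber F ≤ s →
          max (E0 n k s).card (E1 n k s).card < F.card →
            ∃ W ⊆ Finset.Icc 1 n, W.card = k * s + k - 1 ∧ ∀ A ∈ F, A ⊆ W := by
  set K : ℕ := 2 * (k + 1) * k * k * (8 * k) ^ k * (8 * k) ^ k with hK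
  have hKpos : 0 < K := by positivity
  have hKr : (0 : ℝ) < K := by exact_mod_cast hKpos
  refine ⟨1 / K, 8 * k ^ 3, by positivity, by positivity, ?_⟩
  intro n s hs hn hnβ F hF hν hcard
  refine main_nat k hk n s hs hn ?_ F hF hν hcard
  rw [← hK]
  have h1 : (K : ℝ) * (n - (k * s + k - 2)) ≤ k * s := by
    have h2 : (n : ℝ) - (k * s + k - 2) ≤ 1 / K * (k * s) := by linarith
    calc (K : ℝ) * (n - (k * s + k - 2)) ≤ K * (1 / K * (k * s)) :=
          mul_le_mul_of_nonneg_left h2 hKr.le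
      _ = k * s := by field_simp
  have h3 : ((n - (k * s + k - 2) : ℕ) : ℝ) = n - (k * s + k - 2) := by
    rw [Nat.cast_sub (by omega), Nat.cast_sub (by omega)]
    push_cast
    ring
  rw [← h3] at h1
  have h4 : K * (n - (k * s + k - 2)) ≤ k * s := by exact_mod_cast h1
  omega
end

section
/- Let n, s, k be positive integers with k ≥ 2 and n > 2k³s. If F ⊆ binom([n],k) is a k-graph with ν(F) ≤ s < τ(F), then |F| ≤ C(n,k) − C(n−s, k) − C(n−s−k, k−1) + 1. -/
namespace BDE
open Finset

/-- upper bound for the number of `k`-subsets of an `n`-set containing a given `j`-set -/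
def Q (n k j : ℕ) : ℕ := if j ≤ k then (n - j).choose (k - j) else 0

lemma cover_bound (G : Finset (Finset ℕ)) (T : Finset ℕ) (d : ℕ)
    (hcov : ∀ A ∈ G, ∃ t ∈ T, t ∈ A) (hd : ∀ t ∈ T, #{A ∈ G | t ∈ A} ≤ d) :
    #G ≤ #T * d := by
  have h : G ⊆ T.biUnion (fun t => {A ∈ G | t ∈ A}) := by
    intro A hA
    obtain ⟨t, ht, htA⟩ := hcov A hA
    simp only [mem_biUnion, mem_filter]
    exact ⟨t, ht, hA, htA⟩
  exact (card_le_card h).trans (card_biUnion_le_card_mul _ _ _ hd)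

lemma sup_card (V S : Finset ℕ) (k : ℕ) (hS : S ⊆ V) (G : Finset (Finset ℕ))
    (hG : G ⊆ powersetCard k V) (hGS : ∀ A ∈ G, S ⊆ A) : #G ≤ Q #V k #S := by
  unfold Q
  split_ifs with h
  · rw [← card_sdiff_of_subset hS, ← card_powersetCard]
    apply card_le_card_of_injOn (fun A => A \ S)
    · intro A hA
      have h1 := mem_powersetCard.1 (hG hA)
      simp only [mem_coe, mem_powersetCard]
      refine ⟨sdiff_subset_sdiff h1.1 le_rfl, ?_⟩
      rw [card_sdiff_of_subset (hGS A hA), h1.2]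
    · intro A hA B hB hAB
      simp only at hAB
      rw [← sdiff_union_of_subset (hGS A hA), hAB, sdiff_union_of_subset (hGS B hB)]
  · rw [Nat.le_zero, card_eq_zero, eq_empty_iff_forall_notMem]
    intro A hA
    have h1 := mem_powersetCard.1 (hG hA)
    have := card_le_card (hGS A hA)
    omega

lemma sup_meet (V S U : Finset ℕ) (k : ℕ) (hS : S ⊆ V) (hU : U ⊆ V) (hSU : Disjoint S U)
    (G : Finset (Finset ℕ)) (hG : G ⊆ powersetCard k V) (hGS : ∀ A ∈ G, S ⊆ A)
    (hGU : ∀ A ∈ G, ¬ Disjoint A U) : #G ≤ #U * Q #V k (#S + 1) := by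
  apply cover_bound
  · intro A hA
    obtain ⟨t, h1, h2⟩ := not_disjoint_iff.1 (hGU A hA)
    exact ⟨t, h2, h1⟩
  · intro t ht
    have htS : t ∉ S := fun h => (disjoint_left.1 hSU h) ht
    rw [← card_insert_of_notMem htS]
    apply sup_card V _ k (insert_subset (hU ht) hS) _ ((filter_subset _ _).trans hG)
    intro A hA
    rw [mem_filter] at hA
    exact insert_subset hA.2 (hGS A hA.1)

lemma choose_upper (M d j : ℕ) :
    (M + d).choose (j + 1) ≤ M.choose (j + 1) + d * (M + d - 1).choose j := by
  induction d with
  | zero => simp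
  | succ d ih =>
    have h1 : (M + (d + 1)).choose (j + 1) = (M + d).choose j + (M + d).choose (j + 1) := by
      rw [← add_assoc, Nat.choose_succ_succ]
    have h2 : M + (d + 1) - 1 = M + d := by omega
    have h3 : (M + d - 1).choose j ≤ (M + d).choose j := Nat.choose_le_choose _ (by omega)
    rw [h1, h2]
    nlinarith

lemma choose_lower (M d j : ℕ) :
    M.choose (j + 1) + d * M.choose j ≤ (M + d).choose (j + 1) := by
  induction d with
  | zero => simp
  | succ d ih =>
    have h1 : (M + (d + 1)).choose (j + 1) = (M + d).choose j + (M + d).choose (j + 1) := by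
      rw [← add_assoc, Nat.choose_succ_succ]
    have h3 : M.choose j ≤ (M + d).choose j := Nat.choose_le_choose _ (by omega)
    rw [h1]
    nlinarith

/-- if `N + 1 ≥ (j+1) * (c + d)`, then `c * C(N, j) ≤ C(N + 1 - d, j+1)` -/
lemma choose_ratio (N M d j c : ℕ) (hN : N + 1 = M + d) (h : (j + 1) * (c + d) ≤ N + 1) :
    c * N.choose j ≤ M.choose (j + 1) := by
  have h1 := choose_upper M d j
  rw [← hN] at h1
  simp only [Nat.add_sub_cancel] at h1
  have h2 : (N + 1) * N.choose j = (N + 1).choose (j + 1) * (j + 1) :=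
    Nat.add_one_mul_choose_eq N j
  have h3 : (j + 1) * ((c + d) * N.choose j) ≤ (j + 1) * (N + 1).choose (j + 1) := by
    rw [← mul_assoc, mul_comm (j + 1) ((N + 1).choose (j + 1)), ← h2]
    exact Nat.mul_le_mul_right _ h
  have h4 := Nat.le_of_mul_le_mul_left h3 (Nat.succ_pos j)
  nlinarith

lemma disj_card (V b : Finset ℕ) (r : ℕ) (hb : b ∈ powersetCard r V) :
    #(powersetCard r (V \ b)) = (#V - r).choose r := by
  have h := mem_powersetCard.1 hb
  rw [card_powersetCard, card_sdiff_of_subset h.1, h.2]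

/-- The families of sets disjoint from one of two distinct sets. -/
lemma disj_two (V : Finset ℕ) (r : ℕ) (A : Finset (Finset ℕ)) (hA : A ⊆ powersetCard (r + 1) V)
    (b c : Finset ℕ) (hb : b ∈ powersetCard (r + 1) V) (hc : c ∈ powersetCard (r + 1) V)
    (hbc : b ≠ c) (hAb : ∀ a ∈ A, ¬ Disjoint a b) (hAc : ∀ a ∈ A, ¬ Disjoint a c) :
    #A + (#V - (r + 1)).choose (r + 1) + (#V - (r + 1) - 1).choose r ≤ (#V).choose (r + 1) := by
  have hb' := mem_powersetCard.1 hb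
  have hc' := mem_powersetCard.1 hc
  obtain ⟨u, hub, huc⟩ : ∃ u ∈ b, u ∉ c := by
    by_contra! h
    exact hbc (eq_of_subset_of_card_le h (by omega))
  set X := powersetCard (r + 1) (V \ b) with hX
  set Y := (powersetCard r ((V \ c).erase u)).image (insert u) with hY
  have hYc : #Y = (#V - (r + 1) - 1).choose r := by
    rw [hY, card_image_of_injOn, card_powersetCard, card_erase_of_mem,
      card_sdiff_of_subset hc'.1, hc'.2]
    · simp [huc, hb'.1 hub]
    · intro s hs t ht hst
      have hs' : u ∉ s := fun h => by
        have := (mem_powersetCard.1 hs).1 h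
        simp at this
      have ht' : u ∉ t := fun h => by
        have := (mem_powersetCard.1 ht).1 h
        simp at this
      rw [← erase_insert hs', hst, erase_insert ht']
  have hYu : ∀ y ∈ Y, u ∈ y ∧ Disjoint y c ∧ y ∈ powersetCard (r + 1) V := by
    intro y hy
    simp only [hY, mem_image, mem_powersetCard] at hy
    obtain ⟨a, ⟨h1, h2⟩, rfl⟩ := hy
    have hua : u ∉ a := fun h => by simpa using h1 h
    have h3 : a ⊆ V \ c := h1.trans (erase_subset _ _)
    refine ⟨mem_insert_self _ _, ?_, mem_powersetCard.2 ⟨?_, ?_⟩⟩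
    · rw [disjoint_insert_left]
      exact ⟨huc, disjoint_of_subset_left h3 sdiff_disjoint⟩
    · exact insert_subset (hb'.1 hub) (h3.trans sdiff_subset)
    · rw [card_insert_of_notMem hua, h2]
  have hXp : ∀ x ∈ X, Disjoint x b ∧ x ∈ powersetCard (r + 1) V := by
    intro x hx
    have h := mem_powersetCard.1 hx
    exact ⟨disjoint_of_subset_left h.1 sdiff_disjoint,
      mem_powersetCard.2 ⟨h.1.trans sdiff_subset, h.2⟩⟩
  have d1 : Disjoint A X := disjoint_left.2 fun a h1 h2 => hAb a h1 (hXp a h2).1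
  have d2 : Disjoint (A ∪ X) Y := disjoint_left.2 fun a h1 h2 => by
    rcases mem_union.1 h1 with h | h
    · exact hAc a h (hYu a h2).2.1
    · exact disjoint_left.1 (hXp a h).1 (hYu a h2).1 hub
  have hsub : (A ∪ X) ∪ Y ⊆ powersetCard (r + 1) V := by
    refine union_subset (union_subset hA fun x hx => (hXp x hx).2) fun y hy => (hYu y hy).2.2
  have := card_le_card hsub
  rwa [card_union_of_disjoint d2, card_union_of_disjoint d1, hYc, hX,
    disj_card V b _ hb, card_powersetCard] at this

lemma disj_one (V : Finset ℕ) (r : ℕ) (A : Finset (Finset ℕ)) (hA : A ⊆ powersetCard r V)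
    (b : Finset ℕ) (hb : b ∈ powersetCard r V) (hAb : ∀ a ∈ A, ¬ Disjoint a b) :
    #A + (#V - r).choose r ≤ (#V).choose r := by
  have d1 : Disjoint A (powersetCard r (V \ b)) := disjoint_left.2 fun a h1 h2 =>
    hAb a h1 (disjoint_of_subset_left (mem_powersetCard.1 h2).1 sdiff_disjoint)
  have hsub : A ∪ powersetCard r (V \ b) ⊆ powersetCard r V :=
    union_subset hA (powersetCard_mono sdiff_subset)
  have := card_le_card hsub
  rwa [card_union_of_disjoint d1, disj_card V b _ hb, card_powersetCard] at this

lemma two_star (m r : ℕ) (hm : 3 * (r + 1) + 3 ≤ m) :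
    2 * (m - 1).choose r + (m - (r + 1)).choose (r + 1) ≤ m.choose (r + 1) + 1 := by
  obtain ⟨p, rfl⟩ : ∃ p, m = p + 3 := ⟨m - 3, by omega⟩
  rcases r with _ | _ | r
  · simp; omega
  · have h1 : (p + 3).choose 2 = (p + 2) + (p + 1) + (p + 1).choose 2 := by
      rw [Nat.choose_succ_succ' (p + 2) 1, Nat.choose_succ_succ' (p + 1) 1]; simp; ring
    simp only [zero_add, Nat.reduceAdd, h1]
    have : p + 3 - 2 = p + 1 := by omega
    rw [this]; simp; omega
  · have h1 : (p + 3).choose (r + 3) = (p + 2).choose (r + 2) + ((p + 1).choose (r + 2) +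
        (p.choose (r + 2) + p.choose (r + 3))) := by
      rw [Nat.choose_succ_succ' (p + 2) (r + 2), Nat.choose_succ_succ' (p + 1) (r + 2),
        Nat.choose_succ_succ' p (r + 2)]
    have h2 : (p + 3 - (r + 3)).choose (r + 3) ≤ p.choose (r + 3) :=
      Nat.choose_le_choose _ (by omega)
    have h3 : (p + 2).choose (r + 2) = (p + 1).choose (r + 1) + (p + 1).choose (r + 2) :=
      Nat.choose_succ_succ' _ _
    have h4 := choose_ratio (p + 1) p 2 (r + 1) 1 (by ring) (by omega)
    have h5 : p + 3 - 1 = p + 2 := by omega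
    have h6 : r + 1 + 1 + 1 = r + 3 := by omega
    have h7 : r + 1 + 1 = r + 2 := by omega
    rw [h5, h6, h7, h1]
    rw [h7] at h4
    omega

/-- Cross-intersecting families for large ground sets. -/
lemma cross_wlog (V : Finset ℕ) (r : ℕ) (hm : 2 * (r + 2) ^ 3 ≤ #V + 2)
    (A B : Finset (Finset ℕ)) (hA : A ⊆ powersetCard (r + 1) V) (hB : B ⊆ powersetCard (r + 1) V)
    (hBne : B.Nonempty) (hcross : ∀ a ∈ A, ∀ b ∈ B, ¬ Disjoint a b) (hle : #B ≤ #A) :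
    #A + #B + (#V - (r + 1)).choose (r + 1) ≤ (#V).choose (r + 1) + 1 := by
  obtain ⟨b, hb⟩ := hBne
  by_cases h1 : #B ≤ 1
  · have := disj_one V (r + 1) A hA b (hB hb) (fun a ha => hcross a ha b hb)
    omega
  push Not at h1
  obtain ⟨b, hb, c, hc, hbc⟩ := one_lt_card.1 h1
  have h2 := disj_two V r A hA b c (hB hb) (hB hc) hbc (fun a ha => hcross a ha b hb)
    (fun a ha => hcross a ha c hc)
  by_cases h3 : #B ≤ (#V - (r + 1) - 1).choose r + 1
  · omega
  push Not at h3
  have hmm : 3 * (r + 1) + 3 ≤ #V := by nlinarith [sq_nonneg r]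
  -- the large case
  have hQ : (r + 1) * ((r + 1) * Q #V (r + 1) 2) < #B := by
    refine lt_of_le_of_lt ?_ h3
    unfold Q
    split_ifs with h
    · obtain ⟨q, rfl⟩ : ∃ q, r = q + 1 := ⟨r - 1, by omega⟩
      have e1 : q + 1 + 1 - 2 = q := by omega
      rw [e1, ← mul_assoc]
      refine (choose_ratio (#V - 2) _ (q + 2) q _ (by omega) ?_).trans (Nat.le_succ _)
      have : #V - 2 + 1 + 1 = #V := by omega
      nlinarith [sq_nonneg q]
    · simp
  have key : ∀ (X : Finset (Finset ℕ)), X ⊆ powersetCard (r + 1) V → ∀ x ∈ V,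
      ∀ y ∈ powersetCard (r + 1) V, x ∉ y → (∀ z ∈ X, x ∈ z → ¬ Disjoint z y) →
      #{z ∈ X | x ∈ z} ≤ (r + 1) * Q #V (r + 1) 2 := by
    intro X hX x hx y hy hxy hz
    have hy' := mem_powersetCard.1 hy
    have := sup_meet V {x} y (r + 1) (by simpa using hx) hy'.1 (by simpa using hxy)
      {z ∈ X | x ∈ z} ((filter_subset _ _).trans hX) (by simp)
      (by intro z hz'; rw [mem_filter] at hz'; exact hz z hz'.1 hz'.2)
    simpa [hy'.2] using this
  obtain ⟨a, ha⟩ : A.Nonempty := card_pos.1 (by omega)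
  have ha' := mem_powersetCard.1 (hA ha)
  obtain ⟨x, hxa, hx⟩ : ∃ x ∈ a, (r + 1) * Q #V (r + 1) 2 < #{z ∈ B | x ∈ z} := by
    by_contra! h
    have := cover_bound B a _ (by
      intro b hb
      obtain ⟨t, h1, h2⟩ := not_disjoint_iff.1 (hcross a ha b hb)
      exact ⟨t, h1, h2⟩) h
    rw [ha'.2] at this
    omega
  have hxV := ha'.1 hxa
  have hAx : ∀ a ∈ A, x ∈ a := by
    intro a' h
    by_contra hx'
    have := key B hB x hxV a' (hA h) hx' (fun z hz _ hd => hcross a' h z hz hd.symm)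
    omega
  have hBx : ∀ b ∈ B, x ∈ b := by
    intro b' h
    by_contra hx'
    have h5 := key A hA x hxV b' (hB h) hx' (fun z hz _ => hcross z hz b' h)
    rw [filter_true_of_mem hAx] at h5
    have : (r + 1) * Q #V (r + 1) 2 ≤ (r + 1) * ((r + 1) * Q #V (r + 1) 2) :=
      Nat.le_mul_of_pos_left _ (by omega)
    omega
  have c1 := sup_card V {x} (r + 1) (by simpa using hxV) A hA (by simpa using hAx)
  have c2 := sup_card V {x} (r + 1) (by simpa using hxV) B hB (by simpa using hBx)
  simp only [Q, card_singleton, Nat.le_add_left, if_true, Nat.add_sub_cancel] at c1 c2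
  have := two_star #V r hmm
  omega

lemma cross (V : Finset ℕ) (r : ℕ) (hm : 2 * (r + 2) ^ 3 ≤ #V + 2)
    (A B : Finset (Finset ℕ)) (hA : A ⊆ powersetCard (r + 1) V) (hB : B ⊆ powersetCard (r + 1) V)
    (hAne : A.Nonempty) (hBne : B.Nonempty) (hcross : ∀ a ∈ A, ∀ b ∈ B, ¬ Disjoint a b) :
    #A + #B + (#V - (r + 1)).choose (r + 1) ≤ (#V).choose (r + 1) + 1 := by
  rcases le_total #B #A with h | h
  · exact cross_wlog V r hm A B hA hB hBne hcross h
  · have := cross_wlog V r hm B A hB hA hAne (fun a ha b hb hd => hcross b hb a ha hd.symm) h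
    omega

/-- Hilton–Milner for large ground sets. -/
lemma hilton_milner (k : ℕ) (hk : 2 ≤ k) (V : Finset ℕ) (F : Finset (Finset ℕ))
    (hn : 2 * k ^ 3 < #V) (hF : F ⊆ powersetCard k V)
    (hpair : ∀ A ∈ F, ∀ B ∈ F, ¬ Disjoint A B)
    (hcov : ∀ x ∈ V, ∃ A ∈ F, x ∉ A) :
    #F + (#V - 1 - k).choose (k - 1) ≤ (#V - 1).choose (k - 1) + 1 := by
  obtain ⟨r, rfl⟩ : ∃ r, k = r + 2 := ⟨k - 2, by omega⟩
  have hFm := fun A hA => mem_powersetCard.1 (hF (x := A) hA)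
  have hbig : 2 * (r + 2) + 3 ≤ #V := by nlinarith [sq_nonneg r]
  by_cases h2 : ∃ x ∈ V, ∃ y ∈ V, x ≠ y ∧ ∀ A ∈ F, x ∈ A ∨ y ∈ A
  · obtain ⟨x, hx, y, hy, hxy, hc⟩ := h2
    set W := (V.erase x).erase y with hW
    have hWc : #W = #V - 2 := by
      rw [hW, card_erase_of_mem (by simp [hy, hxy.symm]), card_erase_of_mem hx]; omega
    have half : ∀ x y : ℕ, x ∈ V → x ≠ y → (V.erase x).erase y = W →
        ({A ∈ F | x ∈ A ∧ y ∉ A}.image fun A => A.erase x) ⊆ powersetCard (r + 1) W ∧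
        #({A ∈ F | x ∈ A ∧ y ∉ A}.image fun A => A.erase x) = #{A ∈ F | x ∈ A ∧ y ∉ A} := by
      intro x y hx hxy hW'
      constructor
      · intro C hC
        simp only [mem_image, mem_filter] at hC
        obtain ⟨A, ⟨hA, hxA, hyA⟩, rfl⟩ := hC
        rw [mem_powersetCard, card_erase_of_mem hxA, (hFm A hA).2, ← hW']
        refine ⟨?_, by omega⟩
        intro z hz
        simp only [mem_erase] at hz ⊢
        exact ⟨fun h => hyA (h ▸ hz.2), hz.1, (hFm A hA).1 hz.2⟩
      · apply card_image_of_injOn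
        intro A hA B hB hAB
        simp only [coe_filter, Set.mem_ofPred_eq] at hA hB hAB
        rw [← insert_erase hA.2.1, hAB, insert_erase hB.2.1]
    obtain ⟨hA1, hA2⟩ := half x y hx hxy rfl
    obtain ⟨hB1, hB2⟩ := half y x hy hxy.symm (by rw [hW, erase_right_comm])
    have := cross W r (by omega) _ _ hA1 hB1 (by
        obtain ⟨A, hA, hA'⟩ := hcov y hy
        exact ⟨_, mem_image_of_mem _ (mem_filter.2 ⟨hA, (hc A hA).resolve_right hA', hA'⟩)⟩) (by
        obtain ⟨A, hA, hA'⟩ := hcov x hx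
        exact ⟨_, mem_image_of_mem _ (mem_filter.2 ⟨hA, (hc A hA).resolve_left hA', hA'⟩)⟩) (by
        intro a ha b hb
        simp only [mem_image, mem_filter] at ha hb
        obtain ⟨A, ⟨hA, hxA, hyA⟩, rfl⟩ := ha
        obtain ⟨B, ⟨hB, hyB, hxB⟩, rfl⟩ := hb
        obtain ⟨z, hzA, hzB⟩ := not_disjoint_iff.1 (hpair A hA B hB)
        refine not_disjoint_iff.2 ⟨z, mem_erase.2 ⟨?_, hzA⟩, mem_erase.2 ⟨?_, hzB⟩⟩
        · rintro rfl; exact hxB hzB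
        · rintro rfl; exact hyA hzA)
    rw [hA2, hB2, hWc] at this
    have c3 := sup_card V {x, y} (r + 2) (by intro z; simp; rintro (rfl | rfl) <;> assumption)
      {A ∈ F | x ∈ A ∧ y ∈ A} ((filter_subset _ _).trans hF) (by
        intro A hA
        rw [mem_filter] at hA
        intro z; simp; rintro (rfl | rfl); exacts [hA.2.1, hA.2.2])
    rw [card_pair hxy] at c3
    simp only [Q, Nat.le_add_left, if_true, Nat.add_sub_cancel] at c3
    have hsplit : #F ≤ #{A ∈ F | x ∈ A ∧ y ∈ A} + #{A ∈ F | x ∈ A ∧ y ∉ A} +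
        #{A ∈ F | y ∈ A ∧ x ∉ A} := by
      refine le_trans (card_le_card ?_) ((card_union_le _ _).trans
        (Nat.add_le_add_right (card_union_le _ _) _))
      intro A hA
      have := hc A hA
      simp only [mem_union, mem_filter]
      tauto
    have e1 : (#V - 1).choose (r + 1) = (#V - 2).choose r + (#V - 2).choose (r + 1) := by
      have : #V - 1 = #V - 2 + 1 := by omega
      rw [this, Nat.choose_succ_succ']
    have e2 : r + 2 - 1 = r + 1 := by omega
    have e3 : #V - 1 - (r + 2) = #V - 2 - (r + 1) := by omega
    rw [e2, e3, e1]
    omega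
  · push Not at h2
    have hmiss : ∀ x ∈ V, ∀ y ∈ V, ∃ A ∈ F, x ∉ A ∧ y ∉ A := by
      intro x hx y hy
      by_cases h : x = y
      · subst h
        obtain ⟨A, hA, h⟩ := hcov x hx
        exact ⟨A, hA, h, h⟩
      · exact h2 x hx y hy h
    have hmeet : ∀ E ∈ F, ∀ A ∈ F, ∃ t ∈ E, t ∈ A := fun E hE A hA =>
      not_disjoint_iff.1 (hpair E hE A hA)
    have pairb : ∀ x ∈ V, ∀ y ∈ V, x ≠ y →
        #{A ∈ {A ∈ F | x ∈ A} | y ∈ A} ≤ (r + 2) * Q #V (r + 2) 3 := by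
      intro x hx y hy hxy
      obtain ⟨E, hE, hxE, hyE⟩ := hmiss x hx y hy
      have := sup_meet V {x, y} E (r + 2) (by intro z; simp; rintro (rfl | rfl) <;> assumption)
        (hFm E hE).1 (by simp [hxE, hyE]) {A ∈ {A ∈ F | x ∈ A} | y ∈ A}
        ((filter_subset _ _).trans ((filter_subset _ _).trans hF)) (by
          intro A hA
          simp only [mem_filter] at hA
          intro z; simp; rintro (rfl | rfl); exacts [hA.1.2, hA.2]) (by
          intro A hA
          simp only [mem_filter] at hA
          exact hpair A hA.1.1 E hE)
      rwa [card_pair hxy, (hFm E hE).2] at this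
    have oneb : ∀ x ∈ V, #{A ∈ F | x ∈ A} ≤ (r + 2) * ((r + 2) * Q #V (r + 2) 3) := by
      intro x hx
      obtain ⟨E, hE, hxE⟩ := hcov x hx
      rw [← (hFm E hE).2]
      apply cover_bound
      · intro A hA
        exact hmeet E hE A (mem_filter.1 hA).1
      · intro y hy
        have := pairb x hx y ((hFm E hE).1 hy) (by rintro rfl; exact hxE hy)
        rwa [(hFm E hE).2]
    have allb : #F ≤ (r + 2) * ((r + 2) * ((r + 2) * Q #V (r + 2) 3)) := by
      have hVne : V.Nonempty := card_pos.1 (by omega)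
      obtain ⟨x0, hx0⟩ := hVne
      obtain ⟨E, hE, -⟩ := hcov x0 hx0
      have := cover_bound F E _ (hmeet E hE) (fun t ht => oneb t ((hFm E hE).1 ht))
      rwa [(hFm E hE).2] at this
    have e2 : r + 2 - 1 = r + 1 := by omega
    rw [e2]
    obtain ⟨M, hM⟩ : ∃ M, #V - 1 = M + (r + 2) := ⟨#V - 1 - (r + 2), by omega⟩
    have l1 := choose_lower M (r + 2) r
    rw [hM, Nat.add_sub_cancel]
    suffices h : (r + 2) * ((r + 2) * ((r + 2) * Q #V (r + 2) 3)) ≤ (r + 2) * M.choose r by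
      omega
    apply Nat.mul_le_mul_left
    unfold Q
    split_ifs with h
    · obtain ⟨q, rfl⟩ : ∃ q, r = q + 1 := ⟨r - 1, by omega⟩
      have e1 : q + 1 + 2 - 3 = q := by omega
      rw [e1, ← mul_assoc]
      refine choose_ratio (#V - 3) _ (q + 2) q _ (by omega) ?_
      have : #V - 3 + 1 + 2 = #V := by omega
      nlinarith [sq_nonneg q]
    · simp

lemma main (k : ℕ) (hk : 2 ≤ k) (s : ℕ) (hs : 1 ≤ s) : ∀ (V : Finset ℕ) (F : Finset (Finset ℕ)),
    2 * k ^ 3 * s < #V → F ⊆ powersetCard k V →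
    (∀ M ⊆ F, (M : Set (Finset ℕ)).PairwiseDisjoint id → #M ≤ s) →
    (∀ T ⊆ V, #T ≤ s → ∃ A ∈ F, Disjoint A T) →
    #F + (#V - s).choose k + (#V - s - k).choose (k - 1) ≤ (#V).choose k + 1 := by
  induction s, hs using Nat.le_induction with
  | base =>
    intro V F hn hF hnu htau
    have h := hilton_milner k hk V F (by omega) hF (by
      intro A hA B hB hd
      have hne : A ≠ B := by
        rintro rfl
        rw [disjoint_self_iff_empty] at hd
        have := (mem_powersetCard.1 (hF hA)).2
        simp [hd] at this
        omega
      have := hnu {A, B} (by intro z; simp; rintro (rfl | rfl) <;> assumption) (by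
        rw [coe_pair]
        exact Set.pairwise_pair.2 fun _ => ⟨hd, hd.symm⟩)
      rw [card_pair hne] at this
      omega) (by
      intro x hx
      obtain ⟨A, hA, h⟩ := htau {x} (by simpa using hx) (by simp)
      exact ⟨A, hA, by simpa using h⟩)
    have e : (#V).choose k = (#V - 1).choose (k - 1) + (#V - 1).choose k := by
      obtain ⟨r, rfl⟩ : ∃ r, k = r + 1 := ⟨k - 1, by omega⟩
      obtain ⟨m, hm⟩ : ∃ r, #V = r + 1 := ⟨#V - 1, by omega⟩
      rw [hm, Nat.choose_succ_succ']; simp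
    omega
  | succ s hs ih =>
    intro V F hn hF hnu htau
    have hFm := fun A hA => mem_powersetCard.1 (hF (x := A) hA)
    have hunion : ∀ M ⊆ F, #(M.biUnion id) ≤ #M * k := by
      intro M hM
      exact card_biUnion_le_card_mul _ _ _ (fun A hA => (hFm A (hM hA)).2.le)
    have hunionV : ∀ M ⊆ F, M.biUnion id ⊆ V := by
      intro M hM
      exact biUnion_subset.2 fun A hA => (hFm A (hM hA)).1
    -- extension of matchings
    have hext : ∀ M ⊆ F, (M : Set (Finset ℕ)).PairwiseDisjoint id → ∀ A ∈ F,
        Disjoint A (M.biUnion id) →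
        insert A M ⊆ F ∧ ((insert A M : Finset (Finset ℕ)) : Set (Finset ℕ)).PairwiseDisjoint id ∧
        #(insert A M) = #M + 1 := by
      intro M hM hMd A hA hd
      rw [disjoint_biUnion_right] at hd
      refine ⟨insert_subset hA hM, ?_, card_insert_of_notMem ?_⟩
      · rw [coe_insert]
        exact hMd.insert fun j hj _ => hd j hj
      · intro h
        have := hd A h
        simp only [id, disjoint_self_iff_empty] at this
        have h2 := (hFm A hA).2
        simp [this] at h2
        omega
    have hQ2 : Q #V k 2 = (#V - 2).choose (k - 2) := by simp [Q, hk]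
    have hVbig : s + 1 + k + 2 ≤ #V := by
      have : k ^ 3 ≥ 4 * k := by
        have h4 : 4 ≤ k * k := Nat.mul_le_mul hk hk
        calc 4 * k ≤ k * k * k := Nat.mul_le_mul_right _ h4
          _ = k ^ 3 := by ring
      nlinarith
    by_cases hdeg : ∃ v ∈ V, (s + 1) * k * Q #V k 2 < #{A ∈ F | v ∈ A}
    · obtain ⟨v, hv, hdv⟩ := hdeg
      have h := ih (V.erase v) {A ∈ F | v ∉ A} (by
          rw [card_erase_of_mem hv]
          have : 2 * k ^ 3 ≥ 1 := Nat.mul_pos (by norm_num) (Nat.pow_pos (by omega))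
          rw [Nat.mul_succ] at hn
          omega) (by
          intro A hA
          rw [mem_filter] at hA
          rw [mem_powersetCard]
          refine ⟨?_, (hFm A hA.1).2⟩
          exact subset_erase.2 ⟨(hFm A hA.1).1, hA.2⟩) (by
          intro M hM hMd
          by_contra hc
          have hMF : M ⊆ F := hM.trans (filter_subset _ _)
          have hvU : v ∉ M.biUnion id := by
            simp only [mem_biUnion, id, not_exists, not_and]
            intro A hA
            exact (mem_filter.1 (hM hA)).2
          have h1 := sup_meet V {v} (M.biUnion id) k (by simpa using hv) (hunionV M hMF)
            (by rw [disjoint_singleton_left]; exact hvU) {A ∈ F | v ∈ A}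
            ((filter_subset _ _).trans hF) (by simp) (by
              intro A hA hd
              obtain ⟨i1, i2, i3⟩ := hext M hMF hMd A (mem_filter.1 hA).1 hd
              have := hnu _ i1 i2
              omega)
          rw [card_singleton] at h1
          have h2 : #(M.biUnion id) ≤ (s + 1) * k :=
            (hunion M hMF).trans (Nat.mul_le_mul_right _ (hnu M hMF hMd))
          have := Nat.mul_le_mul_right (Q #V k 2) h2
          simp only [Nat.reduceAdd] at h1
          omega) (by
          intro T hT hTs
          obtain ⟨A, hA, hd⟩ := htau (insert v T) (insert_subset hv (hT.trans (erase_subset _ _)))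
            ((card_insert_le _ _).trans (by omega))
          rw [disjoint_insert_right] at hd
          exact ⟨A, mem_filter.2 ⟨hA, hd.1⟩, hd.2⟩)
      rw [card_erase_of_mem hv] at h
      have c1 := sup_card V {v} k (by simpa using hv) {A ∈ F | v ∈ A}
        ((filter_subset _ _).trans hF) (by simp)
      have hk1 : 1 ≤ k := by omega
      simp only [Q, card_singleton, hk1, if_true] at c1
      have e : (#V).choose k = (#V - 1).choose (k - 1) + (#V - 1).choose k := by
        obtain ⟨r, rfl⟩ : ∃ r, k = r + 1 := ⟨k - 1, by omega⟩
        obtain ⟨m, hm⟩ : ∃ r, #V = r + 1 := ⟨#V - 1, by omega⟩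
        rw [hm, Nat.choose_succ_succ']; simp
      have e2 : #V - (s + 1) = #V - 1 - s := by omega
      have e3 := card_filter_add_card_filter_not (s := F) (fun A => v ∈ A)
      rw [e2]
      omega
    · push Not at hdeg
      -- a maximum matching
      classical
      obtain ⟨M, hM, hmax⟩ := exists_max_image
        (F.powerset.filter fun M : Finset (Finset ℕ) =>
          (M : Set (Finset ℕ)).PairwiseDisjoint id) card ⟨∅, by simp⟩
      rw [mem_filter, mem_powerset] at hM
      have h1 := cover_bound F (M.biUnion id) ((s + 1) * k * Q #V k 2) (by
          intro A hA
          by_contra! h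
          obtain ⟨i1, i2, i3⟩ := hext M hM.1 hM.2 A hA (disjoint_right.2 h)
          have := hmax (insert A M) (by rw [mem_filter, mem_powerset]; exact ⟨i1, i2⟩)
          omega) (fun t ht => hdeg t (hunionV M hM.1 ht))
      have h2 : #(M.biUnion id) ≤ (s + 1) * k :=
        (hunion M hM.1).trans (Nat.mul_le_mul_right _ (hnu M hM.1 hM.2))
      have h3 := h1.trans (Nat.mul_le_mul_right _ h2)
      rw [hQ2] at h3
      obtain ⟨r, rfl⟩ : ∃ r, k = r + 2 := ⟨k - 2, by omega⟩
      obtain ⟨p, hp⟩ : ∃ p, #V = p + s + 1 := ⟨#V - s - 1, by omega⟩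
      have a1 : #V - (s + 1) = p := by omega
      have a2 : r + 2 - 1 = r + 1 := by omega
      have a3 : r + 2 - 2 = r := by omega
      rw [a3] at h3
      rw [a1, a2]
      have a4 : (p - (r + 2)).choose (r + 1) ≤ p.choose (r + 1) :=
        Nat.choose_le_choose _ (by omega)
      have a5 := choose_lower (p + 1) s (r + 1)
      have a6 : p + 1 + s = #V := by omega
      rw [a6, Nat.choose_succ_succ' p (r + 1)] at a5
      have a7 := choose_ratio (#V - 2) (p + 1) (s - 1) r (2 * (s + 1) * (r + 2) ^ 2) (by omega) (by
        obtain ⟨t, rfl⟩ : ∃ t, s = t + 1 := ⟨s - 1, by omega⟩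
        have : #V - 2 + 1 + 1 = #V := by omega
        simp only [Nat.add_sub_cancel]
        nlinarith [sq_nonneg r, mul_nonneg (Nat.zero_le t) (Nat.zero_le r),
          mul_nonneg (Nat.zero_le t) (sq_nonneg r)])
      have a8 : (s + 1) * (r + 2) * ((s + 1) * (r + 2) * (#V - 2).choose r) ≤
          s * (p + 1).choose (r + 1) := by
        calc (s + 1) * (r + 2) * ((s + 1) * (r + 2) * (#V - 2).choose r)
            = (s + 1) * ((s + 1) * (r + 2) ^ 2 * (#V - 2).choose r) := by ring
          _ ≤ (2 * s) * ((s + 1) * (r + 2) ^ 2 * (#V - 2).choose r) :=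
              Nat.mul_le_mul_right _ (by omega)
          _ = s * (2 * (s + 1) * (r + 2) ^ 2 * (#V - 2).choose r) := by ring
          _ ≤ _ := Nat.mul_le_mul_left _ a7
      have a9 : r + 1 + 1 = r + 2 := rfl
      rw [a9] at a5
      omega

end BDE

/-- the Bollobás–Daykin–Erdős stability bound. -/
theorem stmt16 (n k s : ℕ) (hk : 2 ≤ k) (hs : 1 ≤ s) (hn : 2 * k ^ 3 * s < n)
    (F : Finset (Finset ℕ)) (hF : F ⊆ Finset.powersetCard k (Finset.Icc 1 n))
    (hnu : matchingNumber F ≤ s) (htau : s < coverNum n F) :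
    (F.card : ℤ) ≤ (Nat.choose n k : ℤ) - Nat.choose (n - s) k
      - Nat.choose (n - s - k) (k - 1) + 1 := by
  have hnu' : ∀ M ⊆ F, (M : Set (Finset ℕ)).PairwiseDisjoint id → M.card ≤ s := by
    intro M hM hMd
    have hb : BddAbove {m | ∃ M ⊆ F, M.card = m ∧
        (M : Set (Finset ℕ)).PairwiseDisjoint id} := by
      refine ⟨F.card, ?_⟩
      rintro m ⟨M', hM', rfl, -⟩
      exact Finset.card_le_card hM'
    exact le_trans (le_csSup hb ⟨M, hM, rfl, hMd⟩) hnu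
  have htau' : ∀ T ⊆ Finset.Icc 1 n, T.card ≤ s → ∃ A ∈ F, Disjoint A T := by
    intro T hT hTs
    by_contra! h
    have : coverNum n F ≤ T.card := Nat.sInf_le ⟨T, hT, rfl, fun A hA =>
      Finset.nonempty_iff_ne_empty.2 fun he => h A hA (Finset.disjoint_iff_inter_eq_empty.2 he)⟩
    omega
  have h := BDE.main k hk s hs (Finset.Icc 1 n) F (by simpa using hn) hF hnu' htau'
  simp only [Nat.card_Icc, Nat.add_sub_cancel] at h
  omega
end

section
/- For every integer k ≥ 2 there exists a positive integer s₀ such that the following holds for every integer s > s₀. If F ⊆ binom([ks+k],k) is a non-trivial k-graph on ks + k vertices with ν(F) ≤ s, then |F| ≤ |E₀(ks+k, k, s)|. -/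
/-- Neighbourhood of a family in the Kneser graph. -/
def kN (a : ℕ) (X : Finset ℕ) (S : Finset (Finset ℕ)) : Finset (Finset ℕ) :=
  (Finset.powersetCard a X).filter (fun B => ∃ A ∈ S, Disjoint A B)

/-- Image of a family under a transposition. -/
def kSw (p q : ℕ) (S : Finset (Finset ℕ)) : Finset (Finset ℕ) :=
  S.image (fun A => A.image (Equiv.swap p q))

lemma sw_image_image (p q : ℕ) (A : Finset ℕ) :
    (A.image (Equiv.swap p q)).image (Equiv.swap p q) = A := by
  have h : (Equiv.swap p q : ℕ → ℕ) ∘ (Equiv.swap p q) = id := by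
    funext z; simp
  rw [Finset.image_image, h, Finset.image_id]

lemma sw_image_inj (p q : ℕ) : Function.Injective (fun A : Finset ℕ => A.image (Equiv.swap p q)) := by
  intro A B h
  have := congrArg (fun A : Finset ℕ => A.image (Equiv.swap p q)) h
  simpa [sw_image_image] using this

lemma mem_kSw (p q : ℕ) (S : Finset (Finset ℕ)) (A : Finset ℕ) :
    A ∈ kSw p q S ↔ A.image (Equiv.swap p q) ∈ S := by
  unfold kSw
  rw [Finset.mem_image]
  constructor
  · rintro ⟨B, hB, rfl⟩
    rwa [sw_image_image]
  · intro h
    exact ⟨_, h, sw_image_image p q A⟩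

lemma kSw_card (p q : ℕ) (S : Finset (Finset ℕ)) : (kSw p q S).card = S.card :=
  Finset.card_image_of_injective _ (sw_image_inj p q)

lemma sw_mem_pow {a : ℕ} {X : Finset ℕ} {p q : ℕ} (hp : p ∈ X) (hq : q ∈ X) {A : Finset ℕ}
    (hA : A ∈ Finset.powersetCard a X) :
    A.image (Equiv.swap p q) ∈ Finset.powersetCard a X := by
  rw [Finset.mem_powersetCard] at hA ⊢
  refine ⟨?_, ?_⟩
  · intro z hz
    rw [Finset.mem_image] at hz
    obtain ⟨w, hw, rfl⟩ := hz
    rw [Equiv.swap_apply_def]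
    split_ifs
    · exact hq
    · exact hp
    · exact hA.1 hw
  · rw [Finset.card_image_of_injective _ (Equiv.injective _)]; exact hA.2

lemma kSw_sub {a : ℕ} {X : Finset ℕ} {p q : ℕ} (hp : p ∈ X) (hq : q ∈ X) {S : Finset (Finset ℕ)}
    (hS : S ⊆ Finset.powersetCard a X) : kSw p q S ⊆ Finset.powersetCard a X := by
  intro A hA
  rw [mem_kSw] at hA
  have := sw_mem_pow hp hq (hS hA)
  rwa [sw_image_image] at this

lemma kN_kSw {a : ℕ} {X : Finset ℕ} {p q : ℕ} (hp : p ∈ X) (hq : q ∈ X) (S : Finset (Finset ℕ)) :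
    kN a X (kSw p q S) = kSw p q (kN a X S) := by
  have key : ∀ A B : Finset ℕ, Disjoint A (B.image (Equiv.swap p q)) ↔
      Disjoint (A.image (Equiv.swap p q)) B := by
    intro A B
    rw [← Finset.disjoint_image (Equiv.injective (Equiv.swap p q)), sw_image_image]
  ext B
  rw [mem_kSw]
  simp only [kN, Finset.mem_filter]
  constructor
  · rintro ⟨h1, A, hA, hd⟩
    rw [mem_kSw] at hA
    refine ⟨sw_mem_pow hp hq h1, _, hA, ?_⟩
    rw [key, sw_image_image]; exact hd
  · rintro ⟨h1, A, hA, hd⟩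
    refine ⟨by simpa [sw_image_image] using sw_mem_pow hp hq h1, A.image (Equiv.swap p q), ?_, ?_⟩
    · rw [mem_kSw, sw_image_image]; exact hA
    · rw [← key]; exact hd

lemma sw_fix_out {p q : ℕ} {A : Finset ℕ} (hp : p ∉ A) (hq : q ∉ A) :
    A.image (Equiv.swap p q) = A := by
  ext z
  rw [Finset.mem_image]
  constructor
  · rintro ⟨w, hw, rfl⟩
    rw [Equiv.swap_apply_of_ne_of_ne (by rintro rfl; exact hp hw) (by rintro rfl; exact hq hw)]
    exact hw
  · intro hw
    exact ⟨z, hw, Equiv.swap_apply_of_ne_of_ne (by rintro rfl; exact hp hw) (by rintro rfl; exact hq hw)⟩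

lemma sw_mem_iff (p q z : ℕ) (A : Finset ℕ) :
    z ∈ A.image (Equiv.swap p q) ↔ Equiv.swap p q z ∈ A := by
  rw [Finset.mem_image]
  constructor
  · rintro ⟨w, hw, rfl⟩; simpa using hw
  · intro h; exact ⟨_, h, by simp⟩

lemma sw_fix_in {p q : ℕ} {A : Finset ℕ} (hp : p ∈ A) (hq : q ∈ A) :
    A.image (Equiv.swap p q) = A := by
  ext z
  rw [sw_mem_iff, Equiv.swap_apply_def]
  split_ifs with h1 h2
  · subst h1; simp [hp, hq]
  · subst h2; simp [hp, hq]
  · rfl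

/-- A family which is a block for all transpositions and has two members is everything. -/
lemma block_all {a : ℕ} {X : Finset ℕ} (hX : 2 * a + 1 ≤ X.card) {S : Finset (Finset ℕ)}
    (hS : S ⊆ Finset.powersetCard a X) (h2 : 1 < S.card)
    (hblock : ∀ p ∈ X, ∀ q ∈ X, ∀ A ∈ S, A.image (Equiv.swap p q) ∈ S →
      ∀ B ∈ S, B.image (Equiv.swap p q) ∈ S) :
    S = Finset.powersetCard a X := by
  obtain ⟨A, hA, A', hA', hne⟩ := Finset.one_lt_card.1 h2
  have cA := Finset.mem_powersetCard.1 (hS hA)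
  have cA' := Finset.mem_powersetCard.1 (hS hA')
  have prop1 : ∀ C ∈ S, ∀ p ∈ C, ∀ q ∈ X, q ∉ C → C.image (Equiv.swap p q) ∈ S →
      ∀ p' ∈ C, ∀ q' ∈ X, q' ∉ C → C.image (Equiv.swap p' q') ∈ S := by
    intro C hC p hp q hq hqC hCS p' hp' q' hq' hqC'
    have cC := Finset.mem_powersetCard.1 (hS hC)
    have s1 : C.image (Equiv.swap p' q) ∈ S := by
      have := hblock p (cC.1 hp) p' (cC.1 hp') C hC (by rw [sw_fix_in hp hp']; exact hC) _ hCS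
      convert this using 1
      ext z
      simp only [sw_mem_iff, Equiv.swap_apply_def]
      grind
    have := hblock q hq q' hq' C hC (by rw [sw_fix_out hqC hqC']; exact hC) _ s1
    convert this using 1
    ext z
    simp only [sw_mem_iff, Equiv.swap_apply_def]
    grind
  have start : ∃ p ∈ A, ∃ q ∈ X, q ∉ A ∧ A.image (Equiv.swap p q) ∈ S := by
    obtain ⟨p, hp, hp'⟩ : ∃ p ∈ A, p ∉ A' := by
      by_contra! hcon
      exact hne (Finset.eq_of_subset_of_card_le hcon (by omega))
    obtain ⟨q, hq, hq'⟩ : ∃ q ∈ X, q ∉ A ∪ A' := by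
      by_contra! hcon
      have := Finset.card_le_card hcon
      have := Finset.card_union_le A A'
      omega
    rw [Finset.mem_union, not_or] at hq'
    exact ⟨p, hp, q, hq, hq'.1, hblock p (cA.1 hp) q hq A' hA'
      (by rw [sw_fix_out hp' hq'.2]; exact hA') A hA⟩
  refine Finset.Subset.antisymm hS ?_
  have main : ∀ d : ℕ, ∀ B ∈ Finset.powersetCard a X, ∀ C ∈ S, (B \ C).card = d →
      (∃ p ∈ C, ∃ q ∈ X, q ∉ C ∧ C.image (Equiv.swap p q) ∈ S) → B ∈ S := by
    intro d
    induction d with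
    | zero =>
      intro B hB C hC h0 _
      have cB := Finset.mem_powersetCard.1 hB
      have cC := Finset.mem_powersetCard.1 (hS hC)
      have : B ⊆ C := by
        rw [Finset.card_eq_zero, Finset.sdiff_eq_empty_iff_subset] at h0; exact h0
      rw [Finset.eq_of_subset_of_card_le this (by omega)]; exact hC
    | succ d ih =>
      rintro B hB C hC hd ⟨p, hp, q, hq, hqC, hCS⟩
      have cB := Finset.mem_powersetCard.1 hB
      have cC := Finset.mem_powersetCard.1 (hS hC)
      obtain ⟨y, hy⟩ : (B \ C).Nonempty := by rw [← Finset.card_pos]; omega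
      have hCB : (C \ B).card = (B \ C).card := by
        have e1 := Finset.card_sdiff_add_card_inter C B
        have e2 := Finset.card_sdiff_add_card_inter B C
        rw [Finset.inter_comm] at e2
        omega
      obtain ⟨x, hx⟩ : (C \ B).Nonempty := by rw [← Finset.card_pos]; omega
      rw [Finset.mem_sdiff] at hx hy
      have hn := prop1 C hC p hp q hq hqC hCS x hx.1 y (cB.1 hy.1) hy.2
      refine ih B hB _ hn ?_ ⟨y, ?_, x, cC.1 hx.1, ?_, ?_⟩
      · have : B \ C.image (Equiv.swap x y) = (B \ C).erase y := by
          ext z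
          simp only [Finset.mem_sdiff, Finset.mem_erase, sw_mem_iff, Equiv.swap_apply_def]
          grind
        rw [this, Finset.card_erase_of_mem (Finset.mem_sdiff.2 hy)]; omega
      · rw [sw_mem_iff]; simpa using hx.1
      · rw [sw_mem_iff]; simpa using hy.2
      · rw [Equiv.swap_comm y x, sw_image_image]; exact hC
  intro B hB
  exact main _ B hB A hA rfl start

lemma kN_union (a : ℕ) (X : Finset ℕ) (S T : Finset (Finset ℕ)) :
    kN a X (S ∪ T) = kN a X S ∪ kN a X T := by
  ext B
  simp only [kN, Finset.mem_filter, Finset.mem_union]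
  grind

lemma kN_inter (a : ℕ) (X : Finset ℕ) (S T : Finset (Finset ℕ)) :
    kN a X (S ∩ T) ⊆ kN a X S ∩ kN a X T := by
  intro B
  simp only [kN, Finset.mem_filter, Finset.mem_inter]
  grind

lemma kN_sub (a : ℕ) (X : Finset ℕ) (S : Finset (Finset ℕ)) :
    kN a X S ⊆ Finset.powersetCard a X := Finset.filter_subset _ _

lemma kneser_expand {a : ℕ} {X : Finset ℕ} (hX : 2 * a + 1 ≤ X.card) {S : Finset (Finset ℕ)}
    (hS : S ⊆ Finset.powersetCard a X) (hne : S.Nonempty) (hN : kN a X S ≠ Finset.powersetCard a X) :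
    S.card + (X.card - a).choose a ≤ (kN a X S).card + 1 := by
  classical
  set K := Finset.powersetCard a X with hK
  let adm : Finset (Finset (Finset ℕ)) := K.powerset.filter (fun S => S.Nonempty ∧ kN a X S ≠ K)
  have mem_adm : ∀ T, T ∈ adm ↔ T ⊆ K ∧ T.Nonempty ∧ kN a X T ≠ K := by
    intro T; simp [adm, Finset.mem_powerset]
  let f : Finset (Finset ℕ) → ℤ := fun T => ((kN a X T).card : ℤ) - T.card
  obtain ⟨S1, hS1, hmin1⟩ := Finset.exists_min_image adm f ⟨S, (mem_adm S).2 ⟨hS, hne, hN⟩⟩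
  obtain ⟨T, hT, hmin2⟩ := Finset.exists_min_image (adm.filter (fun T => f T = f S1)) Finset.card
    ⟨S1, Finset.mem_filter.2 ⟨hS1, rfl⟩⟩
  rw [Finset.mem_filter] at hT
  obtain ⟨hTa, hTf⟩ := hT
  obtain ⟨hTK, hTne, hTN⟩ := (mem_adm T).1 hTa
  have hmin : ∀ U ∈ adm, f T ≤ f U := fun U hU => hTf ▸ hmin1 U hU
  have hmincard : ∀ U ∈ adm, f U ≤ f T → T.card ≤ U.card := by
    intro U hU h
    exact hmin2 U (Finset.mem_filter.2 ⟨hU, by rw [← hTf]; exact le_antisymm h (hmin U hU)⟩)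
  have hNK := kN_sub a X T
  have half : T.card + (kN a X T).card ≤ K.card := by
    have hRcard : (K \ kN a X T).card + (kN a X T).card = K.card :=
      Finset.card_sdiff_add_card_eq_card hNK
    have hNR : kN a X (K \ kN a X T) ⊆ K \ T := by
      intro B hB
      simp only [kN, Finset.mem_filter, Finset.mem_sdiff] at hB
      obtain ⟨hBK, A, ⟨hA, hA2⟩, hd⟩ := hB
      refine Finset.mem_sdiff.2 ⟨hBK, fun hBT => hA2 ⟨hA, B, hBT, hd.symm⟩⟩
    have hTc : (K \ T).card + T.card = K.card := Finset.card_sdiff_add_card_eq_card hTK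
    have hle := Finset.card_le_card hNR
    have hadm : K \ kN a X T ∈ adm := by
      rw [mem_adm]
      refine ⟨Finset.sdiff_subset, ?_, ?_⟩
      · rw [Finset.sdiff_nonempty]
        intro h
        exact hTN (Finset.Subset.antisymm hNK h)
      · intro h
        rw [h] at hle
        have := hTne.card_pos
        omega
    have := hmincard _ hadm (by simp only [f]; omega)
    omega
  have hblock : ∀ p ∈ X, ∀ q ∈ X, ∀ A ∈ T, A.image (Equiv.swap p q) ∈ T →
      ∀ B ∈ T, B.image (Equiv.swap p q) ∈ T := by
    intro p hp q hq A hA hA' B hB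
    by_contra hcon
    set U := kSw p q T with hU
    have hUc : U.card = T.card := kSw_card _ _ _
    have hUN : (kN a X U).card = (kN a X T).card := by
      rw [hU, kN_kSw hp hq, kSw_card]
    have hAU : A ∈ T ∩ U := by
      rw [Finset.mem_inter, hU, mem_kSw]; exact ⟨hA, hA'⟩
    have hBU : B ∉ U := by rw [hU, mem_kSw]; exact hcon
    have hlt : (T ∩ U).card < T.card := by
      apply Finset.card_lt_card
      refine Finset.ssubset_iff_subset_ne.2 ⟨Finset.inter_subset_left, ?_⟩
      intro h
      rw [← h] at hB
      exact hBU (Finset.mem_inter.1 hB).2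
    have hUK : U ⊆ K := kSw_sub hp hq hTK
    have hIsub := kN_inter a X T U
    have hIcard := Finset.card_le_card hIsub
    have hadmI : T ∩ U ∈ adm := by
      rw [mem_adm]
      refine ⟨Finset.inter_subset_left.trans hTK, ⟨A, hAU⟩, ?_⟩
      intro h
      apply hTN
      refine Finset.Subset.antisymm hNK ?_
      rw [← h]
      exact hIsub.trans Finset.inter_subset_left
    have hI : f T < f (T ∩ U) := by
      by_contra h
      have := hmincard _ hadmI (not_lt.1 h)
      omega
    have hu := Finset.card_union_add_card_inter T U
    have hNu := Finset.card_union_add_card_inter (kN a X T) (kN a X U)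
    rw [← kN_union] at hNu
    have hpos : 0 < (T ∩ U).card := Finset.card_pos.2 ⟨A, hAU⟩
    simp only [f] at hI
    have hadmU : T ∪ U ∈ adm := by
      rw [mem_adm]
      refine ⟨Finset.union_subset hTK hUK, hTne.mono Finset.subset_union_left, ?_⟩
      intro h
      rw [h] at hNu
      omega
    have := hmin _ hadmU
    simp only [f] at this
    omega
  have hT1 : T.card = 1 := by
    by_contra h
    have hpos := hTne.card_pos
    have hall := block_all hX hTK (by omega) hblock
    apply hTN
    refine Finset.Subset.antisymm hNK ?_
    intro B hB
    have cB := Finset.mem_powersetCard.1 hB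
    obtain ⟨A, hA1, hA2⟩ := Finset.exists_subset_card_eq (s := X \ B) (n := a)
      (by rw [Finset.card_sdiff_of_subset cB.1]; omega)
    rw [kN, Finset.mem_filter]
    refine ⟨hB, A, ?_, ?_⟩
    · rw [hall, Finset.mem_powersetCard]
      exact ⟨hA1.trans Finset.sdiff_subset, hA2⟩
    · exact Finset.disjoint_of_subset_left hA1 Finset.sdiff_disjoint
  obtain ⟨A, rfl⟩ := Finset.card_eq_one.1 hT1
  have cA := Finset.mem_powersetCard.1 (hTK (Finset.mem_singleton_self A))
  have hNA : (kN a X {A}).card = (X.card - a).choose a := by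
    have : kN a X {A} = Finset.powersetCard a (X \ A) := by
      ext B
      simp only [kN, Finset.mem_filter, Finset.mem_powersetCard, Finset.mem_singleton,
        exists_eq_left, Finset.subset_sdiff]
      rw [disjoint_comm]
      tauto
    rw [this, Finset.card_powersetCard, Finset.card_sdiff_of_subset cA.1, cA.2]
  have := hmin S ((mem_adm S).2 ⟨hS, hne, hN⟩)
  simp only [f, hNA, Finset.card_singleton] at this
  omega

lemma cross_inter {a : ℕ} {X : Finset ℕ} (hX : 2 * a + 1 ≤ X.card) {S T : Finset (Finset ℕ)}
    (hS : S ⊆ Finset.powersetCard a X) (hT : T ⊆ Finset.powersetCard a X)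
    (hSne : S.Nonempty) (hTne : T.Nonempty) (hc : ∀ A ∈ S, ∀ B ∈ T, ¬ Disjoint A B) :
    S.card + T.card + (X.card - a).choose a ≤ X.card.choose a + 1 := by
  have hsub : kN a X S ⊆ Finset.powersetCard a X \ T := by
    intro B hB
    rw [kN, Finset.mem_filter] at hB
    obtain ⟨h1, A, hA, hd⟩ := hB
    exact Finset.mem_sdiff.2 ⟨h1, fun h => hc A hA B h hd⟩
  have h1 := Finset.card_le_card hsub
  have h2 := Finset.card_sdiff_add_card_eq_card hT
  rw [Finset.card_powersetCard] at h2
  have h3 := kneser_expand hX hS hSne (by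
    intro h
    obtain ⟨B, hB⟩ := hTne
    rw [h] at hsub
    exact (Finset.mem_sdiff.1 (hsub (hT hB))).2 hB)
  omega

/-- Degree of a vertex in a family. -/
def vdeg (G : Finset (Finset ℕ)) (v : ℕ) : ℕ := (G.filter (fun A => v ∈ A)).card

lemma augment {k : ℕ} (hk : 1 ≤ k) {V : Finset ℕ} {F M M' : Finset (Finset ℕ)}
    (hF : F ⊆ Finset.powersetCard k V) (hM : M ⊆ F)
    (hd : (M : Set (Finset ℕ)).PairwiseDisjoint id) (hM' : M' ⊆ M)
    (u : Fin k → ℕ) (hu : Function.Injective u) (huV : ∀ i, u i ∈ V)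
    (huM : ∀ i, ∀ E ∈ M, u i ∉ E)
    (hcount : ∑ i, vdeg (Finset.powersetCard k V \ F) (u i) < M'.card.choose (k - 1)) :
    ∃ M2 ⊆ F, (M2 : Set (Finset ℕ)).PairwiseDisjoint id ∧ M \ M' ⊆ M2 ∧ M2.card = M.card + 1 := by
  classical
  have hen : ∀ E : Finset ℕ, ∃ e : Fin k → ℕ, E ∈ M → (Function.Injective e ∧ ∀ i, e i ∈ E) := by
    intro E
    by_cases h : E ∈ M
    · have hc := (Finset.mem_powersetCard.1 (hF (hM h))).2
      exact ⟨E.orderEmbOfFin hc, fun _ => ⟨(E.orderEmbOfFin hc).injective,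
        fun i => Finset.orderEmbOfFin_mem E hc i⟩⟩
    · exact ⟨fun _ => 0, fun h' => absurd h' h⟩
  choose e he using hen
  have hdis : ∀ E ∈ M, ∀ E' ∈ M, ∀ z, z ∈ E → z ∈ E' → E = E' := by
    intro E hE E' hE' z hz hz'
    by_contra hne
    have := hd hE hE' hne
    exact Finset.disjoint_left.1 this hz hz'
  let edge : Fin k → Finset (Finset ℕ) → Finset ℕ := fun i S => insert (u i) (S.image (fun E => e E i))
  have hedge : ∀ i S z, z ∈ edge i S ↔ z = u i ∨ ∃ E ∈ S, e E i = z := by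
    intro i S z; simp [edge]
  have hmeet : ∀ i, ∀ S ⊆ M, ∀ E ∈ M, (∃ z ∈ E, z ∈ edge i S) ↔ E ∈ S := by
    intro i S hS E hE
    constructor
    · rintro ⟨z, hz, hz2⟩
      rw [hedge] at hz2
      rcases hz2 with rfl | ⟨E', hE', rfl⟩
      · exact absurd hz (huM i E hE)
      · rw [hdis E hE E' (hS hE') _ hz ((he E' (hS hE')).2 i)]; exact hE'
    · intro h
      exact ⟨e E i, (he E hE).2 i, (hedge _ _ _).2 (Or.inr ⟨E, h, rfl⟩)⟩
  have hedgeK : ∀ i, ∀ S ∈ Finset.powersetCard (k - 1) M', edge i S ∈ Finset.powersetCard k V := by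
    intro i S hS
    rw [Finset.mem_powersetCard] at hS
    have hSM := hS.1.trans hM'
    rw [Finset.mem_powersetCard]
    constructor
    · intro z hz
      rw [hedge] at hz
      rcases hz with rfl | ⟨E, hE, rfl⟩
      · exact huV i
      · exact (Finset.mem_powersetCard.1 (hF (hM (hSM hE)))).1 ((he E (hSM hE)).2 i)
    · rw [Finset.card_insert_of_notMem, Finset.card_image_of_injOn, hS.2]
      · omega
      · intro E hE E' hE' h
        have h1 := (he E (hSM hE)).2 i
        have h2 := (he E' (hSM hE')).2 i
        simp only at h
        rw [← h] at h2
        exact hdis E (hSM hE) E' (hSM hE') _ h1 h2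
      · intro h
        rw [Finset.mem_image] at h
        obtain ⟨E, hE, h⟩ := h
        apply huM i E (hSM hE)
        rw [← h]
        exact (he E (hSM hE)).2 i
  let bad : Fin k → Finset (Finset (Finset ℕ)) := fun i =>
    (Finset.powersetCard (k - 1) M').filter (fun S => edge i S ∉ F)
  have hbad : ∀ i, (bad i).card ≤ vdeg (Finset.powersetCard k V \ F) (u i) := by
    intro i
    refine Finset.card_le_card_of_injOn (edge i) ?_ ?_
    · intro S hS
      have hS' := Finset.mem_filter.1 hS
      simp only [Finset.coe_filter, Set.mem_ofPred_eq, Finset.mem_sdiff]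
      exact ⟨⟨hedgeK i S hS'.1, hS'.2⟩, (hedge _ _ _).2 (Or.inl rfl)⟩
    · intro S hS T hT h
      have hS' := (Finset.mem_powersetCard.1 (Finset.mem_filter.1 hS).1).1.trans hM'
      have hT' := (Finset.mem_powersetCard.1 (Finset.mem_filter.1 hT).1).1.trans hM'
      ext E
      constructor
      · intro hE
        rw [← hmeet i T hT' E (hS' hE), ← h, hmeet i S hS' E (hS' hE)]; exact hE
      · intro hE
        rw [← hmeet i S hS' E (hT' hE), h, hmeet i T hT' E (hT' hE)]; exact hE
  have hlt : (Finset.univ.biUnion bad).card < (Finset.powersetCard (k - 1) M').card := by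
    rw [Finset.card_powersetCard]
    refine lt_of_le_of_lt (Finset.card_biUnion_le.trans (Finset.sum_le_sum fun i _ => hbad i)) hcount
  obtain ⟨S, hS, hSb⟩ := Finset.exists_mem_notMem_of_card_lt_card hlt
  have hgood : ∀ i, edge i S ∈ F := by
    intro i
    by_contra h
    exact hSb (Finset.mem_biUnion.2 ⟨i, Finset.mem_univ _, Finset.mem_filter.2 ⟨hS, h⟩⟩)
  have hS' := Finset.mem_powersetCard.1 hS
  have hSM := hS'.1.trans hM'
  have hdd : ∀ i j, i ≠ j → Disjoint (edge i S) (edge j S) := by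
    intro i j hij
    rw [Finset.disjoint_left]
    intro z hz hz'
    rw [hedge] at hz hz'
    rcases hz with rfl | ⟨E, hE, rfl⟩
    · rcases hz' with h | ⟨E', hE', h⟩
      · exact hij (hu h)
      · exact huM i E' (hSM hE') (h ▸ (he E' (hSM hE')).2 j)
    · rcases hz' with h | ⟨E', hE', h⟩
      · exact huM j E (hSM hE) (h ▸ (he E (hSM hE)).2 i)
      · have h1 := (he E (hSM hE)).2 i
        have h2 := (he E' (hSM hE')).2 j
        rw [h] at h2
        have := hdis E (hSM hE) E' (hSM hE') _ h1 h2
        subst this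
        exact hij ((he E (hSM hE)).1 h).symm
  have hde : ∀ i, ∀ E ∈ M \ S, Disjoint (edge i S) E := by
    intro i E hE
    rw [Finset.mem_sdiff] at hE
    rw [Finset.disjoint_left]
    intro z hz hz'
    exact hE.2 ((hmeet i S hSM E hE.1).1 ⟨z, hz', hz⟩)
  have hnon : ∀ i, u i ∈ edge i S := fun i => (hedge _ _ _).2 (Or.inl rfl)
  refine ⟨(M \ S) ∪ Finset.univ.image (fun i => edge i S), ?_, ?_, ?_, ?_⟩
  · intro A hA
    rw [Finset.mem_union, Finset.mem_image] at hA
    rcases hA with hA | ⟨i, _, rfl⟩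
    · exact hM (Finset.mem_sdiff.1 hA).1
    · exact hgood i
  · intro A hA B hB hAB
    simp only [Finset.coe_union, Set.mem_union, Finset.mem_coe, Finset.mem_image, Finset.mem_univ, true_and] at hA hB
    simp only [Function.onFun, id]
    rcases hA with hA | ⟨i, rfl⟩
    · rcases hB with hB | ⟨j, rfl⟩
      · exact hd (Finset.mem_sdiff.1 hA).1 (Finset.mem_sdiff.1 hB).1 hAB
      · exact (hde j A hA).symm
    · rcases hB with hB | ⟨j, rfl⟩
      · exact hde i B hB
      · exact hdd i j (by rintro rfl; exact hAB rfl)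
  · intro A hA
    rw [Finset.mem_sdiff] at hA
    exact Finset.mem_union_left _ (Finset.mem_sdiff.2 ⟨hA.1, fun h => hA.2 (hS'.1 h)⟩)
  · rw [Finset.card_union_of_disjoint, Finset.card_image_of_injective, Finset.card_univ,
      Fintype.card_fin, Finset.card_sdiff_of_subset hSM, hS'.2]
    · have := Finset.card_le_card hSM
      omega
    · intro i j h
      by_contra hij
      have := hdd i j hij
      simp only at h
      rw [← h] at this
      exact Finset.disjoint_left.1 this (hnon i) (hnon i)
    · rw [Finset.disjoint_right]
      intro A hA hA2
      rw [Finset.mem_image] at hA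
      obtain ⟨i, _, rfl⟩ := hA
      exact Finset.disjoint_left.1 (hde i _ hA2) (hnon i) (hnon i)

lemma vdeg_full {k : ℕ} (hk : 1 ≤ k) {V : Finset ℕ} {v : ℕ} (hv : v ∈ V) :
    vdeg (Finset.powersetCard k V) v = (V.card - 1).choose (k - 1) := by
  rw [vdeg, ← Finset.card_erase_of_mem hv, ← Finset.card_powersetCard]
  refine Finset.card_bij' (fun A _ => A.erase v) (fun A _ => insert v A) ?_ ?_ ?_ ?_
  · intro A hA
    simp only [Finset.mem_filter, Finset.mem_powersetCard] at hA ⊢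
    exact ⟨Finset.erase_subset_erase _ hA.1.1, by rw [Finset.card_erase_of_mem hA.2, hA.1.2]⟩
  · intro A hA
    simp only [Finset.mem_filter, Finset.mem_powersetCard] at hA ⊢
    have hvA : v ∉ A := fun h => by simpa using hA.1 h
    refine ⟨⟨?_, ?_⟩, Finset.mem_insert_self _ _⟩
    · exact Finset.insert_subset hv (hA.1.trans (Finset.erase_subset _ _))
    · rw [Finset.card_insert_of_notMem hvA]; omega
  · intro A hA
    exact Finset.insert_erase (Finset.mem_filter.1 hA).2
  · intro A hA
    simp only [Finset.mem_powersetCard] at hA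
    have hvA : v ∉ A := fun h => by simpa using hA.1 h
    exact Finset.erase_insert hvA

lemma pair_deg {k : ℕ} {V : Finset ℕ} {F : Finset (Finset ℕ)}
    (hF : F ⊆ Finset.powersetCard k V) {v w : ℕ} (hv : v ∈ V) (hw : w ∈ V) (hvw : v ≠ w) :
    (F.filter (fun A => v ∈ A ∧ w ∈ A)).card ≤ (V.card - 2).choose (k - 2) := by
  have : V.card - 2 = ((V.erase v).erase w).card := by
    rw [Finset.card_erase_of_mem (Finset.mem_erase.2 ⟨hvw.symm, hw⟩), Finset.card_erase_of_mem hv]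
    omega
  rw [this, ← Finset.card_powersetCard]
  refine Finset.card_le_card_of_injOn (fun A => (A.erase v).erase w) ?_ ?_
  · intro A hA
    simp only [Finset.coe_filter, Set.mem_ofPred_eq] at hA
    have := Finset.mem_powersetCard.1 (hF hA.1)
    simp only [Finset.mem_coe, Finset.mem_powersetCard]
    refine ⟨Finset.erase_subset_erase _ (Finset.erase_subset_erase _ this.1), ?_⟩
    rw [Finset.card_erase_of_mem (Finset.mem_erase.2 ⟨hvw.symm, hA.2.2⟩),
      Finset.card_erase_of_mem hA.2.1]
    omega
  · intro A hA B hB h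
    simp only [Finset.coe_filter, Set.mem_ofPred_eq] at hA hB
    ext z
    have := congrArg (fun C => z ∈ C) h
    simp only [Finset.mem_erase, eq_iff_iff] at this
    grind

lemma vdeg_sum {k : ℕ} {V : Finset ℕ} {G : Finset (Finset ℕ)}
    (hG : G ⊆ Finset.powersetCard k V) : ∑ v ∈ V, vdeg G v = k * G.card := by
  have h := Finset.sum_card_bipartiteAbove_eq_sum_card_bipartiteBelow (s := V) (t := G)
    (fun v A => v ∈ A)
  unfold vdeg
  unfold Finset.bipartiteAbove Finset.bipartiteBelow at h
  rw [h, mul_comm, ← smul_eq_mul, ← Finset.sum_const]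
  refine Finset.sum_congr rfl fun A hA => ?_
  have := Finset.mem_powersetCard.1 (hG hA)
  rw [Finset.filter_mem_eq_inter, Finset.inter_eq_right.2 this.1, this.2]

lemma extend_cover {k : ℕ} {V : Finset ℕ} {F : Finset (Finset ℕ)}
    (hF : F ⊆ Finset.powersetCard k V) (M0 : Finset (Finset ℕ)) (hM0 : M0 ⊆ F)
    (hd0 : (M0 : Set (Finset ℕ)).PairwiseDisjoint id) (L : Finset ℕ) (b : ℕ) (hLV : L ⊆ V)
    (hL : ∀ v ∈ L, (∃ A ∈ M0, v ∈ A) ∨ b * (V.card - 2).choose (k - 2) < vdeg F v) :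
    k * (M0.card + L.card) ≤ b →
    ∃ M1 ⊆ F, M0 ⊆ M1 ∧ (M1 : Set (Finset ℕ)).PairwiseDisjoint id ∧
      M1.card ≤ M0.card + L.card ∧ ∀ v ∈ L, ∃ A ∈ M1, v ∈ A := by
  classical
  induction L using Finset.induction_on with
  | empty => intro _; exact ⟨M0, hM0, subset_rfl, hd0, by simp, by simp⟩
  | insert v L hvL ih =>
    intro hb
    rw [Finset.card_insert_of_notMem hvL] at hb
    obtain ⟨M1, h1, h2, h3, h4, h5⟩ := ih ((Finset.subset_insert _ _).trans hLV)
      (fun w hw => hL w (Finset.mem_insert_of_mem hw))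
      (le_trans (Nat.mul_le_mul_left _ (by omega)) hb)
    rw [Finset.card_insert_of_notMem hvL]
    by_cases hv : ∃ A ∈ M1, v ∈ A
    · refine ⟨M1, h1, h2, h3, by omega, ?_⟩
      intro w hw
      rcases Finset.mem_insert.1 hw with rfl | hw
      · exact hv
      · exact h5 w hw
    have hdeg : b * (V.card - 2).choose (k - 2) < vdeg F v := by
      rcases hL v (Finset.mem_insert_self _ _) with ⟨A, hA, hvA⟩ | h
      · exact absurd ⟨A, h2 hA, hvA⟩ hv
      · exact h
    have hvV : v ∈ V := hLV (Finset.mem_insert_self _ _)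
    have hUsub : M1.biUnion id ⊆ V := by
      intro z hz
      obtain ⟨A, hA, hz⟩ := Finset.mem_biUnion.1 hz
      exact (Finset.mem_powersetCard.1 (hF (h1 hA))).1 hz
    have hUcard : (M1.biUnion id).card ≤ b := by
      refine le_trans Finset.card_biUnion_le ?_
      have : ∑ A ∈ M1, (id A).card = ∑ A ∈ M1, k :=
        Finset.sum_congr rfl fun A hA => (Finset.mem_powersetCard.1 (hF (h1 hA))).2
      rw [this, Finset.sum_const, smul_eq_mul, mul_comm]
      exact le_trans (Nat.mul_le_mul_left _ (by omega)) hb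
    have hbadcard : ((M1.biUnion id).biUnion
        (fun w => F.filter (fun A => v ∈ A ∧ w ∈ A))).card ≤ b * (V.card - 2).choose (k - 2) := by
      refine le_trans Finset.card_biUnion_le ?_
      refine le_trans (Finset.sum_le_card_nsmul _ _ ((V.card - 2).choose (k - 2)) ?_) ?_
      · intro w hw
        refine pair_deg hF hvV (hUsub hw) ?_
        rintro rfl
        obtain ⟨A, hA, hz⟩ := Finset.mem_biUnion.1 hw
        exact hv ⟨A, hA, hz⟩
      · rw [smul_eq_mul]; exact Nat.mul_le_mul_right _ hUcard
    obtain ⟨A, hA, hAb⟩ := Finset.exists_mem_notMem_of_card_lt_card (lt_of_le_of_lt hbadcard hdeg)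
    rw [Finset.mem_filter] at hA
    have hAdis : ∀ B ∈ M1, Disjoint A B := by
      intro B hB
      rw [Finset.disjoint_left]
      intro z hz hz'
      exact hAb (Finset.mem_biUnion.2 ⟨z, Finset.mem_biUnion.2 ⟨B, hB, hz'⟩,
        Finset.mem_filter.2 ⟨hA.1, hA.2, hz⟩⟩)
    refine ⟨insert A M1, Finset.insert_subset hA.1 h1, h2.trans (Finset.subset_insert _ _), ?_, ?_, ?_⟩
    · rw [Finset.coe_insert, Set.pairwiseDisjoint_insert]
      exact ⟨h3, fun B hB _ => hAdis B hB⟩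
    · have := Finset.card_insert_le A M1
      omega
    · intro w hw
      rcases Finset.mem_insert.1 hw with rfl | hw
      · exact ⟨A, Finset.mem_insert_self _ _, hA.2⟩
      · obtain ⟨B, hB, h⟩ := h5 w hw
        exact ⟨B, Finset.mem_insert_of_mem hB, h⟩

lemma pm_exists {k t D : ℕ} (hk : 2 ≤ k) {V : Finset ℕ} (hV : V.card = k * t)
    {F : Finset (Finset ℕ)} (hF : F ⊆ Finset.powersetCard k V)
    (M0 : Finset (Finset ℕ)) (hM0 : M0 ⊆ F)
    (hd0 : (M0 : Set (Finset ℕ)).PairwiseDisjoint id) (hM0c : M0.card ≤ 2)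
    (hG : (Finset.powersetCard k V \ F).card ≤ 2 * (k * t) ^ (k - 1))
    (hH : ∀ v ∈ V, (∃ A ∈ M0, v ∈ A) ∨ (k * t - 1).choose (k - 1) ≤ 4 * vdeg F v)
    (n1 : k * (k * t) ^ (k - 1) < D * (t / 4).choose (k - 1))
    (n2 : 4 * (k * (2 + 2 * k * D)) * (k * t - 2).choose (k - 2) < (k * t - 1).choose (k - 1))
    (n3 : 2 * (k * t) ^ (k - 1) < (k * t / 2).choose k)
    (n4 : 4 * (4 + 2 * k * D) ≤ t) :
    ∃ M ⊆ F, (M : Set (Finset ℕ)).PairwiseDisjoint id ∧ M.card = t := by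
  classical
  set G := Finset.powersetCard k V \ F with hGdef
  have hGK : G ⊆ Finset.powersetCard k V := Finset.sdiff_subset
  have hkt : 0 < (k * t) ^ (k - 1) := by
    apply pow_pos
    apply Nat.mul_pos <;> omega
  set L := V.filter (fun v => (k * t) ^ (k - 1) < D * vdeg G v) with hLdef
  have hLc : L.card ≤ 2 * k * D := by
    have h1 : L.card * (k * t) ^ (k - 1) ≤ ∑ v ∈ L, D * vdeg G v := by
      rw [← smul_eq_mul]
      refine Finset.card_nsmul_le_sum _ _ _ ?_
      intro v hv
      exact (Finset.mem_filter.1 hv).2.le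
    have h2 : ∑ v ∈ L, D * vdeg G v ≤ ∑ v ∈ V, D * vdeg G v :=
      Finset.sum_le_sum_of_subset (Finset.filter_subset _ _)
    rw [← Finset.mul_sum, ← Finset.mul_sum, vdeg_sum hGK] at h2
    rw [← Finset.mul_sum] at h1
    have h3 : D * (k * G.card) ≤ (2 * k * D) * (k * t) ^ (k - 1) := by
      calc D * (k * G.card) ≤ D * (k * (2 * (k * t) ^ (k - 1))) := by gcongr
        _ = _ := by ring
    exact Nat.le_of_mul_le_mul_right (h1.trans (h2.trans h3)) hkt
  obtain ⟨M1, hM1F, hM01, hM1d, hM1c, hM1L⟩ := extend_cover hF M0 hM0 hd0 L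
    (k * (2 + 2 * k * D)) (Finset.filter_subset _ _) (by
      intro v hv
      rcases hH v (Finset.mem_filter.1 hv).1 with h | h
      · exact Or.inl h
      · right
        rw [hV]
        have : 4 * (k * (2 + 2 * k * D) * (k * t - 2).choose (k - 2)) < 4 * vdeg F v := by
          rw [← mul_assoc]
          exact lt_of_lt_of_le n2 h
        omega) (Nat.mul_le_mul_left _ (by omega))
  let fam := F.powerset.filter (fun M => M1 ⊆ M ∧ (M : Set (Finset ℕ)).PairwiseDisjoint id)
  obtain ⟨M, hM, hMmax⟩ := Finset.exists_max_image fam Finset.card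
    ⟨M1, Finset.mem_filter.2 ⟨Finset.mem_powerset.2 hM1F, subset_rfl, hM1d⟩⟩
  have hM' := Finset.mem_filter.1 hM
  obtain ⟨hMF, hM1M, hMd⟩ := hM'
  rw [Finset.mem_powerset] at hMF
  have hmax : ∀ N ⊆ F, M1 ⊆ N → (N : Set (Finset ℕ)).PairwiseDisjoint id → N.card ≤ M.card :=
    fun N h1 h2 h3 => hMmax N (Finset.mem_filter.2 ⟨Finset.mem_powerset.2 h1, h2, h3⟩)
  have hUsub : M.biUnion id ⊆ V := by
    intro z hz
    obtain ⟨A, hA, hz⟩ := Finset.mem_biUnion.1 hz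
    exact (Finset.mem_powersetCard.1 (hF (hMF hA))).1 hz
  have hUcard : (M.biUnion id).card = k * M.card := by
    rw [Finset.card_biUnion (fun A hA B hB h => hMd hA hB h)]
    have : ∑ A ∈ M, (id A).card = ∑ A ∈ M, k :=
      Finset.sum_congr rfl fun A hA => (Finset.mem_powersetCard.1 (hF (hMF hA))).2
    rw [this, Finset.sum_const, smul_eq_mul, mul_comm]
  have hMt : M.card ≤ t := by
    have := Finset.card_le_card hUsub
    rw [hUcard, hV] at this
    exact Nat.le_of_mul_le_mul_left this (by omega)
  refine ⟨M, hMF, hMd, ?_⟩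
  by_contra hne
  have hlt : M.card + 1 ≤ t := by omega
  set U := V \ M.biUnion id with hU
  have hUc : U.card + k * M.card = k * t := by
    rw [← hUcard, ← hV]; exact Finset.card_sdiff_add_card_eq_card hUsub
  have hUk : k ≤ U.card := by
    have := Nat.mul_le_mul_left k hlt
    rw [mul_add] at this
    omega
  have hUnot : ∀ z ∈ U, ∀ E ∈ M, z ∉ E := by
    intro z hz E hE hzE
    exact (Finset.mem_sdiff.1 hz).2 (Finset.mem_biUnion.2 ⟨E, hE, hzE⟩)
  have hUG : Finset.powersetCard k U ⊆ G := by
    intro A hA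
    rw [Finset.mem_powersetCard] at hA
    refine Finset.mem_sdiff.2 ⟨Finset.mem_powersetCard.2 ⟨hA.1.trans Finset.sdiff_subset, hA.2⟩, ?_⟩
    intro hAF
    obtain ⟨z, hz⟩ : A.Nonempty := by rw [← Finset.card_pos]; omega
    have hAM : A ∉ M := fun h => hUnot z (hA.1 hz) A h hz
    have := hmax (insert A M) (Finset.insert_subset hAF hMF) (hM1M.trans (Finset.subset_insert _ _)) (by
      rw [Finset.coe_insert, Set.pairwiseDisjoint_insert]
      refine ⟨hMd, fun B hB _ => ?_⟩
      simp only [id]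
      rw [Finset.disjoint_left]
      intro w hw hw'
      exact hUnot w (hA.1 hw) B hB hw')
    rw [Finset.card_insert_of_notMem hAM] at this
    omega
  have hUsmall : U.card < k * t / 2 := by
    by_contra h
    have h1 := Finset.card_le_card hUG
    rw [Finset.card_powersetCard] at h1
    have h2 := Nat.choose_le_choose k (not_lt.1 h)
    omega
  have hMbig : t ≤ 2 * M.card := by
    refine Nat.le_of_mul_le_mul_left (c := k) ?_ (by omega)
    have : k * (2 * M.card) = 2 * (k * M.card) := by ring
    omega
  have hM'c : t / 4 ≤ (M \ M1).card := by
    rw [Finset.card_sdiff_of_subset hM1M]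
    omega
  obtain ⟨U', hU'1, hU'2⟩ := Finset.exists_subset_card_eq hUk
  have huU : ∀ i, U'.orderEmbOfFin hU'2 i ∈ U := fun i => hU'1 (Finset.orderEmbOfFin_mem _ _ _)
  obtain ⟨M2, h1, h2, h3, h4⟩ := augment (by omega) hF hMF hMd (Finset.sdiff_subset : M \ M1 ⊆ M)
    (U'.orderEmbOfFin hU'2) (U'.orderEmbOfFin hU'2).injective
    (fun i => (Finset.mem_sdiff.1 (huU i)).1) (fun i E hE => hUnot _ (huU i) E hE) (by
      rw [← hGdef]
      have hs : D * ∑ i, vdeg G (U'.orderEmbOfFin hU'2 i) ≤ k * (k * t) ^ (k - 1) := by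
        rw [Finset.mul_sum]
        refine le_trans (Finset.sum_le_card_nsmul _ _ ((k * t) ^ (k - 1)) ?_) (by simp)
        intro i _
        by_contra h
        have hiL : U'.orderEmbOfFin hU'2 i ∈ L :=
          Finset.mem_filter.2 ⟨(Finset.mem_sdiff.1 (huU i)).1, not_le.1 h⟩
        obtain ⟨A, hA, hiA⟩ := hM1L _ hiL
        exact hUnot _ (huU i) A (hM1M hA) hiA
      have hc := Nat.choose_le_choose (k - 1) hM'c
      refine lt_of_lt_of_le ?_ hc
      exact lt_of_mul_lt_mul_left (lt_of_le_of_lt hs n1) (Nat.zero_le D))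
  rw [Finset.sdiff_sdiff_eq_self hM1M] at h3
  have := hmax M2 h1 h3 h2
  omega

lemma numerics (k : ℕ) (hk : 2 ≤ k) : ∃ D t₀ : ℕ, ∀ t, t₀ ≤ t →
    k * (k * t) ^ (k - 1) < D * (t / 4).choose (k - 1) ∧
    4 * (k * (2 + 2 * k * D)) * (k * t - 2).choose (k - 2) < (k * t - 1).choose (k - 1) ∧
    2 * (k * t) ^ (k - 1) < (k * t / 2).choose k ∧
    4 * (4 + 2 * k * D) ≤ t ∧ 3 ≤ t := by
  obtain ⟨D, hD⟩ : ∃ D, D = k * ((8 * k) ^ (k - 1) * (k - 1).factorial) + 1 := ⟨_, rfl⟩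
  refine ⟨D, 8 * k + 4 * (k * (2 + 2 * k * D)) * k + 2 * (4 ^ k * k.factorial) + 4 * (4 + 2 * k * D) + 10, ?_⟩
  intro t ht
  have htk : t ≤ k * t := Nat.le_mul_of_pos_left _ (by omega)
  refine ⟨?_, ?_, ?_, by omega, by omega⟩
  · have hc : 0 < (t / 4).choose (k - 1) := Nat.choose_pos (by omega)
    have h1 : (t / 4 + 1 - (k - 1)) ^ (k - 1) ≤ (k - 1).factorial * (t / 4).choose (k - 1) := by
      rw [← Nat.descFactorial_eq_factorial_mul_choose]; exact Nat.pow_sub_le_descFactorial _ _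
    have h2 : k * t ≤ (8 * k) * (t / 4 + 1 - (k - 1)) := by
      have : t ≤ 8 * (t / 4 + 1 - (k - 1)) := by omega
      calc k * t ≤ k * (8 * (t / 4 + 1 - (k - 1))) := Nat.mul_le_mul_left _ this
        _ = _ := by ring
    calc k * (k * t) ^ (k - 1) ≤ k * ((8 * k) * (t / 4 + 1 - (k - 1))) ^ (k - 1) := by gcongr
      _ = k * ((8 * k) ^ (k - 1) * (t / 4 + 1 - (k - 1)) ^ (k - 1)) := by rw [mul_pow]
      _ ≤ k * ((8 * k) ^ (k - 1) * ((k - 1).factorial * (t / 4).choose (k - 1))) := by gcongr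
      _ = (k * ((8 * k) ^ (k - 1) * (k - 1).factorial)) * (t / 4).choose (k - 1) := by ring
      _ < D * (t / 4).choose (k - 1) := by
        apply Nat.mul_lt_mul_of_pos_right _ hc
        omega
  · obtain ⟨j, rfl⟩ : ∃ j, k = j + 2 := ⟨k - 2, by omega⟩
    obtain ⟨b, hb⟩ : ∃ b, b = 4 * ((j + 2) * (2 + 2 * (j + 2) * D)) := ⟨_, rfl⟩
    rw [← hb] at ht ⊢
    obtain ⟨m, hm⟩ : ∃ m, (j + 2) * t = m + 2 := ⟨(j + 2) * t - 2, by omega⟩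
    rw [hm]
    have e1 : m + 2 - 2 = m := by omega
    have e2 : m + 2 - 1 = m + 1 := by omega
    have e3 : j + 2 - 2 = j := by omega
    have e4 : j + 2 - 1 = j + 1 := by omega
    rw [e1, e2, e3, e4]
    have h := Nat.add_one_mul_choose_eq m j
    have hpos : 0 < m.choose j := Nat.choose_pos (by omega)
    refine lt_of_mul_lt_mul_right (a := j + 1) ?_ (Nat.zero_le _)
    rw [← h]
    have : b * (j + 1) < m + 1 := by
      have : b * (j + 1) ≤ b * (j + 2) := Nat.mul_le_mul_left _ (by omega)
      omega
    calc b * m.choose j * (j + 1) = (b * (j + 1)) * m.choose j := by ring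
      _ < _ := Nat.mul_lt_mul_of_pos_right this hpos
  · set n := k * t with hn
    have h1 : (n / 2 + 1 - k) ^ k ≤ k.factorial * (n / 2).choose k := by
      rw [← Nat.descFactorial_eq_factorial_mul_choose]; exact Nat.pow_sub_le_descFactorial _ _
    have h2 : n ≤ 4 * (n / 2 + 1 - k) := by omega
    by_contra hcon
    rw [not_lt] at hcon
    have h3 : n ^ (k - 1) * n ≤ n ^ (k - 1) * (2 * (4 ^ k * k.factorial)) := by
      calc n ^ (k - 1) * n = n ^ k := by rw [← pow_succ]; congr 1; omega
        _ ≤ (4 * (n / 2 + 1 - k)) ^ k := by gcongr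
        _ = 4 ^ k * (n / 2 + 1 - k) ^ k := by rw [mul_pow]
        _ ≤ 4 ^ k * (k.factorial * (2 * n ^ (k - 1))) := by
          gcongr
          exact h1.trans (Nat.mul_le_mul_left _ hcon)
        _ = _ := by ring
    have h4 := Nat.le_of_mul_le_mul_left h3 (by apply pow_pos; omega)
    omega

lemma E0_card (k s : ℕ) (hk : 2 ≤ k) (hs : 2 ≤ s) :
    (k * s + k - 2).choose k + (k * s + k - 2).choose (k - 1) + 1 ≤
      (E0 (k * s + k) k s).card + (k * s + k - 2 - (k - 1)).choose (k - 1) := by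
  classical
  obtain ⟨m, hm⟩ : ∃ m, k * s + k = m + 2 := ⟨k * s + k - 2, by omega⟩
  have hmk : k + 1 ≤ m := by
    have : k * 2 ≤ k * s := Nat.mul_le_mul_left _ hs
    omega
  have e2 : m + 2 - 2 = m := by omega
  have e1 : m + 2 - 1 = m + 1 := by omega
  unfold E0
  rw [hm, e1, e2]
  set P1 := Finset.powersetCard k (Finset.Icc 1 m) with hP1
  set P2 := ((Finset.powersetCard k (Finset.Icc 1 (m + 2))).filter
    (fun A => A \ Finset.Icc 1 m = {m + 1} ∧ (A ∩ Finset.Icc 1 (k - 1)).Nonempty)) with hP2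
  set P3 := (Finset.Icc (m + 2) (m + 2)).image (fun x => insert x (Finset.Icc 1 (k - 1))) with hP3
  have hd12 : Disjoint P1 P2 := by
    rw [Finset.disjoint_left]
    intro A hA hA2
    have h1 := (Finset.mem_powersetCard.1 hA).1
    have h2 := (Finset.mem_filter.1 hA2).2.1
    rw [Finset.sdiff_eq_empty_iff_subset.2 h1] at h2
    exact absurd h2.symm (Finset.singleton_ne_empty _)
  have hP3' : P3 = {insert (m + 2) (Finset.Icc 1 (k - 1))} := by simp [hP3]
  have hd123 : Disjoint (P1 ∪ P2) P3 := by
    rw [hP3', Finset.disjoint_singleton_right, Finset.mem_union, not_or]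
    constructor
    · intro h
      have h1 := (Finset.mem_powersetCard.1 h).1 (Finset.mem_insert_self _ _)
      simp at h1
    · intro h
      have h2 := (Finset.mem_filter.1 h).2.1
      have h3 : m + 2 ∈ insert (m + 2) (Finset.Icc 1 (k - 1)) \ Finset.Icc 1 m := by simp
      rw [h2] at h3
      simp at h3
  rw [Finset.card_union_of_disjoint hd123, Finset.card_union_of_disjoint hd12, hP3',
    Finset.card_singleton]
  have hP1c : P1.card = m.choose k := by simp [hP1]
  have hsub : Finset.powersetCard (k - 1) (Finset.Icc k m) ⊆ Finset.powersetCard (k - 1) (Finset.Icc 1 m) :=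
    Finset.powersetCard_mono (Finset.Icc_subset_Icc (by omega) le_rfl)
  have hP2c : (Finset.powersetCard (k - 1) (Finset.Icc 1 m) \
      Finset.powersetCard (k - 1) (Finset.Icc k m)).card ≤ P2.card := by
    refine Finset.card_le_card_of_injOn (fun A => insert (m + 1) A) ?_ ?_
    · intro A hA
      rw [Finset.mem_coe, Finset.mem_sdiff, Finset.mem_powersetCard, Finset.mem_powersetCard] at hA
      obtain ⟨⟨hA1, hA2⟩, hA3⟩ := hA
      have hmA : m + 1 ∉ A := fun h => by simpa using hA1 h
      rw [Finset.mem_coe, hP2, Finset.mem_filter, Finset.mem_powersetCard]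
      refine ⟨⟨?_, ?_⟩, ?_, ?_⟩
      · intro z hz
        rcases Finset.mem_insert.1 hz with rfl | hz
        · simp
        · have := Finset.mem_Icc.1 (hA1 hz)
          rw [Finset.mem_Icc]; omega
      · rw [Finset.card_insert_of_notMem hmA]; omega
      · ext z
        simp only [Finset.mem_sdiff, Finset.mem_insert, Finset.mem_singleton]
        constructor
        · rintro ⟨h | h, h2⟩
          · exact h
          · exact absurd (hA1 h) h2
        · rintro rfl
          exact ⟨Or.inl rfl, by simp⟩
      · by_contra hcon
        apply hA3
        refine ⟨?_, hA2⟩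
        intro z hz
        have hz1 := Finset.mem_Icc.1 (hA1 hz)
        rw [Finset.mem_Icc]
        refine ⟨?_, hz1.2⟩
        by_contra hzk
        exact hcon ⟨z, Finset.mem_inter.2 ⟨Finset.mem_insert_of_mem hz,
          Finset.mem_Icc.2 ⟨hz1.1, by omega⟩⟩⟩
    · intro A hA B hB h
      rw [Finset.mem_coe, Finset.mem_sdiff, Finset.mem_powersetCard] at hA hB
      have hmA : m + 1 ∉ A := fun h => by simpa using hA.1.1 h
      have hmB : m + 1 ∉ B := fun h => by simpa using hB.1.1 h
      have := congrArg (fun C => Finset.erase C (m + 1)) h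
      simpa [Finset.erase_insert hmA, Finset.erase_insert hmB] using this
  have h1 := Finset.card_sdiff_add_card_eq_card hsub
  rw [Finset.card_powersetCard, Finset.card_powersetCard, Nat.card_Icc, Nat.card_Icc] at h1
  have e3 : m + 1 - k = m - (k - 1) := by omega
  have e4 : m + 1 - 1 = m := by omega
  rw [e3, e4] at h1
  omega

lemma link_card {F : Finset (Finset ℕ)} (x : ℕ) :
    ((F.filter (fun A => x ∈ A)).image (fun A => A.erase x)).card = vdeg F x := by
  rw [vdeg]
  apply Finset.card_image_of_injOn
  intro A hA B hB h
  have hA' := (Finset.mem_filter.1 hA).2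
  have hB' := (Finset.mem_filter.1 hB).2
  simp only at h
  rw [← Finset.insert_erase hA', h, Finset.insert_erase hB']

/-- Frankl's theorem for `n = ks + k`. -/
theorem stmt17 (k : ℕ) (hk : 2 ≤ k) :
    ∃ s₀ : ℕ, 0 < s₀ ∧ ∀ s : ℕ, s₀ < s →
      ∀ F ⊆ Finset.powersetCard k (Finset.Icc 1 (k * s + k)),
        NonTrivial (k * s + k) F → matchingNumber F ≤ s →
          F.card ≤ (E0 (k * s + k) k s).card := by
  classical
  obtain ⟨D, t₀, hnum⟩ := numerics k hk
  refine ⟨t₀ + 10, by omega, ?_⟩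
  intro s hs F hF hnt hmn
  obtain ⟨n1, n2, n3, n4, n5⟩ := hnum (s + 1) (by omega)
  have hE := E0_card k s hk (by omega)
  obtain ⟨n, hn⟩ : ∃ n, n = k * s + k := ⟨_, rfl⟩
  have hns : k * (s + 1) = n := by rw [hn]; ring
  have hbig : k * 10 ≤ k * s := Nat.mul_le_mul_left _ (by omega)
  unfold NonTrivial at hnt
  rw [← hn] at hF hnt hE ⊢
  obtain ⟨V, hVdef⟩ : ∃ V, V = Finset.Icc 1 n := ⟨_, rfl⟩
  rw [← hVdef] at hF hnt
  have hVc : V.card = n := by simp [hVdef]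
  by_contra hcon
  rw [not_le] at hcon
  have hnoPM : ¬ ∃ M ⊆ F, (M : Set (Finset ℕ)).PairwiseDisjoint id ∧ M.card = s + 1 := by
    rintro ⟨M, h1, h2, h3⟩
    have : s + 1 ≤ matchingNumber F := by
      unfold matchingNumber
      refine le_csSup ⟨F.card, ?_⟩ ⟨M, h1, h3, h2⟩
      rintro m ⟨M', hM', rfl, _⟩
      exact Finset.card_le_card hM'
    omega
  set G := Finset.powersetCard k V \ F with hG
  have hGK : G ⊆ Finset.powersetCard k V := Finset.sdiff_subset
  have hGF : G.card + F.card = n.choose k := by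
    rw [hG, Finset.card_sdiff_add_card_eq_card hF, Finset.card_powersetCard, hVc]
  have hp1 : n.choose k = (n - 1).choose (k - 1) + (n - 1).choose k := by
    obtain ⟨j, rfl⟩ : ∃ j, k = j + 1 := ⟨k - 1, by omega⟩
    obtain ⟨m, rfl⟩ : ∃ m, n = m + 1 := ⟨n - 1, by omega⟩
    exact Nat.choose_succ_succ m j
  have hp2 : (n - 1).choose k = (n - 2).choose (k - 1) + (n - 2).choose k := by
    obtain ⟨j, rfl⟩ : ∃ j, k = j + 1 := ⟨k - 1, by omega⟩
    obtain ⟨m, rfl⟩ : ∃ m, n = m + 2 := ⟨n - 2, by omega⟩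
    exact Nat.choose_succ_succ m j
  have hmono : (n - 2 - (k - 1)).choose (k - 1) ≤ (n - 1).choose (k - 1) :=
    Nat.choose_le_choose _ (by omega)
  have hG2 : G.card < 2 * (n - 1).choose (k - 1) := by omega
  have hGpow : G.card ≤ 2 * n ^ (k - 1) := by
    have h1 : (n - 1).choose (k - 1) ≤ (n - 1) ^ (k - 1) := Nat.choose_le_pow _ _
    have h2 : (n - 1) ^ (k - 1) ≤ n ^ (k - 1) := Nat.pow_le_pow_left (by omega) _
    omega
  rw [hns] at n1 n2 n3
  have hPM : ∀ M0 ⊆ F, (M0 : Set (Finset ℕ)).PairwiseDisjoint id → M0.card ≤ 2 →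
      ¬ ∀ v ∈ V, (∃ A ∈ M0, v ∈ A) ∨ (n - 1).choose (k - 1) ≤ 4 * vdeg F v := by
    intro M0 h1 h2 h3 h4
    exact hnoPM (pm_exists hk (by rw [hns]; exact hVc) hF M0 h1 h2 h3
      (by rw [hns]; exact hGpow) (by rw [hns]; exact h4) (by rw [hns]; exact n1) (by rw [hns]; exact n2)
      (by rw [hns]; exact n3) n4)
  have hdegsum : ∀ v ∈ V, vdeg G v + vdeg F v = (n - 1).choose (k - 1) := by
    intro v hv
    rw [← hVc, ← vdeg_full (by omega) hv, vdeg, vdeg, vdeg, hG, ← Finset.card_union_of_disjoint,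
      ← Finset.filter_union, Finset.sdiff_union_of_subset hF]
    exact Finset.disjoint_filter_filter Finset.sdiff_disjoint
  have hpair12 : 12 * (n - 2).choose (k - 2) ≤ (n - 1).choose (k - 1) := by
    refine le_trans (Nat.mul_le_mul_right _ ?_) n2.le
    have : 2 * 2 ≤ k * (2 + 2 * k * D) := Nat.mul_le_mul hk (by omega)
    omega
  set H := V.filter (fun v => 4 * vdeg F v < (n - 1).choose (k - 1)) with hH
  have hHV : ∀ v ∈ H, v ∈ V := fun v hv => (Finset.mem_filter.1 hv).1
  have hHG : ∀ v ∈ H, 3 * (n - 1).choose (k - 1) < 4 * vdeg G v := by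
    intro v hv
    have h1 := (Finset.mem_filter.1 hv).2
    have h2 := hdegsum v (hHV v hv)
    omega
  have hH2 : H.card ≤ 2 := by
    by_contra h
    obtain ⟨x, y, z, hx, hy, hz, hxy, hxz, hyz⟩ := Finset.two_lt_card_iff.1 (not_le.1 h)
    have gx := hHG x hx
    have gy := hHG y hy
    have gz := hHG z hz
    have pxy := pair_deg hGK (hHV x hx) (hHV y hy) hxy
    have pxz := pair_deg hGK (hHV x hx) (hHV z hz) hxz
    have pyz := pair_deg hGK (hHV y hy) (hHV z hz) hyz
    rw [hVc] at pxy pxz pyz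
    have u1 := Finset.card_union_add_card_inter (G.filter (fun A => x ∈ A)) (G.filter (fun A => y ∈ A))
    have u2 := Finset.card_union_add_card_inter
      (G.filter (fun A => x ∈ A) ∪ G.filter (fun A => y ∈ A)) (G.filter (fun A => z ∈ A))
    rw [← Finset.filter_and] at u1
    have u3 : ((G.filter (fun A => x ∈ A) ∪ G.filter (fun A => y ∈ A)) ∩ G.filter (fun A => z ∈ A)).card
        ≤ (G.filter (fun A => x ∈ A ∧ z ∈ A)).card + (G.filter (fun A => y ∈ A ∧ z ∈ A)).card := by
      refine le_trans (Finset.card_le_card ?_) (Finset.card_union_le _ _)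
      intro A
      simp only [Finset.mem_inter, Finset.mem_union, Finset.mem_filter]
      tauto
    have u4 : (G.filter (fun A => x ∈ A) ∪ G.filter (fun A => y ∈ A) ∪ G.filter (fun A => z ∈ A)).card
        ≤ G.card := Finset.card_le_card (by
          intro A
          simp only [Finset.mem_union, Finset.mem_filter]
          tauto)
    unfold vdeg at gx gy gz
    omega
  have hcov : ∀ M0 ⊆ F, (M0 : Set (Finset ℕ)).PairwiseDisjoint id → M0.card ≤ 2 →
      ¬ ∀ v ∈ H, ∃ A ∈ M0, v ∈ A := by
    intro M0 h1 h2 h3 h4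
    apply hPM M0 h1 h2 h3
    intro v hv
    by_cases hvH : v ∈ H
    · exact Or.inl (h4 v hvH)
    · right
      by_contra hlt
      exact hvH (Finset.mem_filter.2 ⟨hv, not_le.1 hlt⟩)
  have hHc : H.card = 2 := by
    by_contra hne
    rcases Nat.lt_or_ge H.card 1 with h0 | h1
    · have : H = ∅ := by rw [← Finset.card_eq_zero]; omega
      exact hcov ∅ (by simp) (by simp) (by simp) (by simp [this])
    · have : H.card = 1 := by omega
      obtain ⟨x, hx⟩ := Finset.card_eq_one.1 this
      obtain ⟨A, hA, hxA⟩ := hnt x (hHV x (by rw [hx]; simp))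
      exact hcov {A} (by simpa using hA) (by simp) (by simp) (by rw [hx]; simpa using hxA)
  obtain ⟨x, y, hxy, hHxy⟩ := Finset.card_eq_two.1 hHc
  have hxV : x ∈ V := hHV x (by rw [hHxy]; simp)
  have hyV : y ∈ V := hHV y (by rw [hHxy]; simp)
  have hnoboth : ∀ A ∈ F, ¬ (x ∈ A ∧ y ∈ A) := by
    intro A hA h
    exact hcov {A} (by simpa using hA) (by simp) (by simp) (by rw [hHxy]; simpa using h)
  have hcross : ∀ A ∈ F, ∀ B ∈ F, x ∈ A → y ∈ B → ¬ Disjoint A B := by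
    intro A hA B hB hxA hyB hdis
    refine hcov {A, B} ?_ ?_ Finset.card_le_two ?_
    · intro C hC
      rw [Finset.mem_insert, Finset.mem_singleton] at hC
      rcases hC with rfl | rfl <;> assumption
    · rw [Finset.coe_pair, Set.pairwiseDisjoint_insert]
      refine ⟨by simp, ?_⟩
      intro C hC _
      rw [Set.mem_singleton_iff] at hC
      subst hC
      exact hdis
    · rw [hHxy]
      intro v hv
      rw [Finset.mem_insert, Finset.mem_singleton] at hv
      rcases hv with rfl | rfl
      · exact ⟨A, by simp, hxA⟩
      · exact ⟨B, by simp, hyB⟩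
  set X := (V.erase x).erase y with hX
  have hXc : X.card = n - 2 := by
    rw [hX, Finset.card_erase_of_mem (Finset.mem_erase.2 ⟨hxy.symm, hyV⟩),
      Finset.card_erase_of_mem hxV]
    omega
  have hlinkx : (F.filter (fun A => x ∈ A)).image (fun A => A.erase x) ⊆ Finset.powersetCard (k - 1) X := by
    intro B hB
    rw [Finset.mem_image] at hB
    obtain ⟨A, hA, rfl⟩ := hB
    rw [Finset.mem_filter] at hA
    have hAk := Finset.mem_powersetCard.1 (hF hA.1)
    have hyA : y ∉ A := fun h => hnoboth A hA.1 ⟨hA.2, h⟩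
    rw [Finset.mem_powersetCard, Finset.card_erase_of_mem hA.2, hAk.2]
    refine ⟨?_, rfl⟩
    intro z hz
    rw [Finset.mem_erase] at hz
    rw [hX, Finset.mem_erase, Finset.mem_erase]
    exact ⟨by rintro rfl; exact hyA hz.2, hz.1, hAk.1 hz.2⟩
  have hlinky : (F.filter (fun A => y ∈ A)).image (fun A => A.erase y) ⊆ Finset.powersetCard (k - 1) X := by
    intro B hB
    rw [Finset.mem_image] at hB
    obtain ⟨A, hA, rfl⟩ := hB
    rw [Finset.mem_filter] at hA
    have hAk := Finset.mem_powersetCard.1 (hF hA.1)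
    have hxA : x ∉ A := fun h => hnoboth A hA.1 ⟨h, hA.2⟩
    rw [Finset.mem_powersetCard, Finset.card_erase_of_mem hA.2, hAk.2]
    refine ⟨?_, rfl⟩
    intro z hz
    rw [Finset.mem_erase] at hz
    rw [hX, Finset.mem_erase, Finset.mem_erase]
    exact ⟨hz.1, by rintro rfl; exact hxA hz.2, hAk.1 hz.2⟩
  have hfinal := cross_inter (by rw [hXc]; omega) hlinkx hlinky
    (by
      obtain ⟨A, hA, hxA⟩ := hnt x hxV
      exact ⟨_, Finset.mem_image.2 ⟨A, Finset.mem_filter.2 ⟨hA, hxA⟩, rfl⟩⟩)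
    (by
      obtain ⟨A, hA, hyA⟩ := hnt y hyV
      exact ⟨_, Finset.mem_image.2 ⟨A, Finset.mem_filter.2 ⟨hA, hyA⟩, rfl⟩⟩)
    (by
      intro A' hA' B' hB' hdis
      rw [Finset.mem_image] at hA' hB'
      obtain ⟨A, hA, rfl⟩ := hA'
      obtain ⟨B, hB, rfl⟩ := hB'
      rw [Finset.mem_filter] at hA hB
      apply hcross A hA.1 B hB.1 hA.2 hB.2
      rw [Finset.disjoint_left] at hdis ⊢
      intro z hz hz'
      refine hdis (Finset.mem_erase.2 ⟨?_, hz⟩) (Finset.mem_erase.2 ⟨?_, hz'⟩)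
      · rintro rfl; exact hnoboth B hB.1 ⟨hz', hB.2⟩
      · rintro rfl; exact hnoboth A hA.1 ⟨hA.2, hz⟩)
  rw [link_card, link_card, hXc] at hfinal
  have hrest : F.card ≤ vdeg F x + vdeg F y + (n - 2).choose k := by
    have hsub : F ⊆ F.filter (fun A => x ∈ A) ∪ F.filter (fun A => y ∈ A) ∪ Finset.powersetCard k X := by
      intro A hA
      have hAk := Finset.mem_powersetCard.1 (hF hA)
      rw [Finset.mem_union, Finset.mem_union, Finset.mem_filter, Finset.mem_filter,
        Finset.mem_powersetCard]
      by_cases hx : x ∈ A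
      · exact Or.inl (Or.inl ⟨hA, hx⟩)
      by_cases hy : y ∈ A
      · exact Or.inl (Or.inr ⟨hA, hy⟩)
      refine Or.inr ⟨?_, hAk.2⟩
      intro z hz
      rw [hX, Finset.mem_erase, Finset.mem_erase]
      exact ⟨by rintro rfl; exact hy hz, by rintro rfl; exact hx hz, hAk.1 hz⟩
    have h1 := Finset.card_le_card hsub
    have h2 := Finset.card_union_le (F.filter (fun A => x ∈ A) ∪ F.filter (fun A => y ∈ A))
      (Finset.powersetCard k X)
    have h3 := Finset.card_union_le (F.filter (fun A => x ∈ A)) (F.filter (fun A => y ∈ A))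
    rw [Finset.card_powersetCard, hXc] at h2
    unfold vdeg
    omega
  omega
end
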